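/- For a sentence J of size n, the colored immaculate function expands into the colored ribbon basis as 𝔖_J = Σ_I L^{-1}_{I,J} R_I, where the sum runs over all sentences I of size n and L^{-1}_{I,J} = Σ_𝒫 (−1)^{ℓ(𝒫)} prod(𝒫), the sum running over all directed paths 𝒫 from I to J in the colored immaculate descent graph 𝔇_A^n (so L^{-1}_{I,J} = 0 unless J is reachable from I, and L^{-1}_{J,J} = 1). -/

import Mathlib

open scoped BigOperators

namespace ColoredImm

variable {A : Type*}

/-- A *weak sentence* over the alphabet `A`: a finite list of words (words may be empty). -/
abbrev Sentence (A : Type*) := List (List A)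

/-- A genuine *sentence*: all of its words are nonempty. -/
def IsSentence (I : Sentence A) : Prop := ∀ w ∈ I, w ≠ []

/-- The size `|I|` of a sentence: its total number of letters. -/
def size (I : Sentence A) : ℕ := (I.map List.length).sum

/-- The word lengths `wℓ(I)` of a sentence. -/
def wl (I : Sentence A) : List ℕ := I.map List.length

/-- The flattening of a weak sentence: delete all empty words. -/
def flattenWS (I : Sentence A) : Sentence A := I.filter (fun w => !w.isEmpty)

/-- `Refines J I` means `J ⪯ I`: the sentence `I` can be obtained by concatenating
some adjacent words of `J` (so `J` is a refinement of `I`, and `I` a coarsening of `J`). -/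
def Refines (J I : Sentence A) : Prop :=
  ∃ P : List (Sentence A), (∀ p ∈ P, p ≠ []) ∧ P.flatten = J ∧ P.map List.flatten = I

/-! ### Fillings and colored immaculate tableaux -/

/-- An integer filling of a diagram, recorded row by row. -/
abbrev Filling := List (List ℕ)

/-- The entry of a filling at box `b = (row, column)` (0-indexed), with default `0`. -/
def entryAt (f : Filling) (b : ℕ × ℕ) : ℕ := (f.getD b.1 []).getD b.2 0

/-- `IsCIT I f`: `f` is a colored immaculate tableau of shape `I`; that is, `f` has the
same shape as the colored composition diagram of `I`, its entries are positive integers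
weakly increasing left to right along each row, and the entries in the first column are
strictly increasing from top to bottom. -/
def IsCIT (I : Sentence A) (f : Filling) : Prop :=
  f.map List.length = I.map List.length ∧
  (∀ row ∈ f, row.Chain' (· ≤ ·)) ∧
  (f.filterMap List.head?).Chain' (· < ·) ∧
  (∀ x ∈ f.flatten, 1 ≤ x)

/-- The colors (letters of `w`) of the boxes of one row whose entry (in `row`) is `v`,
read from left to right. -/
def rowWith (w : List A) (row : List ℕ) (v : ℕ) : List A :=
  ((w.zip row).filter (fun p => p.2 == v)).map Prod.fst

/-- The word of the type of a tableau at value `v`: the colors of all boxes with entry `v`,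
read left to right, from the bottom row up to the top row. -/
def typeWord (I : Sentence A) (f : Filling) (v : ℕ) : List A :=
  (((I.zip f).reverse).map (fun p => rowWith p.1 p.2 v)).flatten

/-- `HasType I f B` : the tableau `f` (of shape `I`) has type the weak sentence `B`,
i.e. for every positive integer `v`, the colors of the boxes of `f` containing `v`
(read left to right, bottom to top) form the `v`-th word of `B`. -/
def HasType (I : Sentence A) (f : Filling) (B : Sentence A) : Prop :=
  ∀ v, 1 ≤ v → typeWord I f v = B.getD (v - 1) []

/-- `K_{J,B}`: the number of colored immaculate tableaux of shape `J` and type `B`. -/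
noncomputable def KJB (J B : Sentence A) : ℕ :=
  Set.ncard {f : Filling | IsCIT J f ∧ HasType J f B}

/-! ### Standardization -/

/-- The list of boxes of a filling. -/
def boxes (f : Filling) : List (ℕ × ℕ) :=
  ((List.range f.length).map
    (fun r => (List.range (f.getD r []).length).map (fun j => (r, j)))).flatten

/-- `beforeB f b b'`: box `b` comes strictly before box `b'` in the type-reading order of `f`
(smaller entries first; among equal entries, lower rows first, and within a row left to right). -/
def beforeB (f : Filling) (b b' : ℕ × ℕ) : Bool :=
  entryAt f b < entryAt f b' ||
    (entryAt f b == entryAt f b' && (b'.1 < b.1 || (b.1 == b'.1 && b.2 < b'.2)))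

/-- The standardization of a filling: each box is renumbered (starting from `1`)
according to its position in the type-reading order. -/
def stdFill (f : Filling) : Filling :=
  (List.range f.length).map (fun r =>
    (List.range (f.getD r []).length).map (fun j =>
      1 + ((boxes f).filter (fun b' => beforeB f b' (r, j))).length))

/-- The number of boxes of a filling. -/
def nBoxes (f : Filling) : ℕ := f.flatten.length

/-- A filling of `n` boxes is standard when its entries are exactly `1, …, n`,
each appearing once. -/
def IsStandardF (f : Filling) : Prop := f.flatten.Perm (List.range' 1 (nBoxes f))

/-! ### Descents and the colored descent composition -/

/-- The (0-indexed) row containing the value `v` in a standard filling. -/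
def rowOf (f : Filling) (v : ℕ) : ℕ := f.findIdx (fun row => row.contains v)

/-- The sorted list of descents of a standard filling: those `i` with `1 ≤ i ≤ n-1`
such that `i+1` lies in a strictly lower row than `i`. -/
def descList (f : Filling) : List ℕ :=
  (List.range' 1 (nBoxes f - 1)).filter (fun i => decide (rowOf f i < rowOf f (i + 1)))

/-- The composition of `n` associated to a set of split positions `d_1 < … < d_k`:
`(d_1, d_2 - d_1, …, n - d_k)`. -/
def compOf (ds : List ℕ) (n : ℕ) : List ℕ :=
  List.zipWith (fun a b => b - a) (0 :: ds) (ds ++ [n])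

/-- Split a word into a sentence according to a composition. -/
def splitByComp : List A → List ℕ → List (List A)
  | _, [] => []
  | w, a :: rest => w.take a :: splitByComp (w.drop a) rest

/-- The color of the box containing the value `v` in a standard filling of shape `I`. -/
def colorOf [Inhabited A] (I : Sentence A) (f : Filling) (v : ℕ) : A :=
  (I.getD (rowOf f v) []).getD ((f.getD (rowOf f v) []).findIdx (fun x => x == v)) default

/-- The maximal word of the colored descent composition of a standard filling of shape `I`:
the colors of its boxes read in the order of their integer entries. -/
def readWord [Inhabited A] (I : Sentence A) (f : Filling) : List A :=
  (List.range (nBoxes f)).map (fun i => colorOf I f (i + 1))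

/-- The colored descent composition `co_A(U)` of a standard colored immaculate tableau:
read the colors of the boxes in the order of their entries, starting a new word
immediately after each descent. -/
def coA [Inhabited A] (I : Sentence A) (f : Filling) : Sentence A :=
  if nBoxes f = 0 then [] else splitByComp (readWord I f) (compOf (descList f) (nBoxes f))

/-- `L_{J,C}`: the number of standard colored immaculate tableaux of shape `J`
with colored descent composition `C`. -/
noncomputable def LJC [Inhabited A] (J C : Sentence A) : ℕ :=
  Set.ncard {f : Filling | IsCIT J f ∧ IsStandardF f ∧ coA J f = C}

/-! ### The colored quasisymmetric functions `QSym_A` -/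

/-- A (normal form of a) monomial in the partially commutative variables `x_{a,i}`:
a pair consisting of the list of words `(w_1, …, w_m)` and the list of (strictly
increasing, positive) second indices `(j_1 < … < j_m)`, representing
`x_{w_1,j_1} ⋯ x_{w_m,j_m}`. -/
abbrev Mono (A : Type*) := List (List A) × List ℕ

/-- A colored quasisymmetric "series": a formal linear combination of monomials,
recorded by its coefficient function.  `QSym_A` itself is the span of the colored
monomial functions `MQ I` inside this space. -/
abbrev QSymA (A : Type*) := Mono A → ℚ

/-- Validity of a monomial normal form: words and indices match up, the indices are
strictly increasing positive integers, and all words are nonempty. -/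
def ValidMono (m : Mono A) : Prop :=
  m.1.length = m.2.length ∧ m.2.Chain' (· < ·) ∧ (∀ j ∈ m.2, 1 ≤ j) ∧ ∀ w ∈ m.1, w ≠ []

open Classical in
/-- The colored monomial quasisymmetric function `M_I`: the sum of all monomials
`x_{w_1,j_1} ⋯ x_{w_m,j_m}` with `j_1 < … < j_m`, where `I = (w_1, …, w_m)`. -/
noncomputable def MQ (I : Sentence A) : QSymA A := fun m =>
  if m.1 = I ∧ ValidMono m then 1 else 0

/-- The largest entry of a filling. -/
def maxEntry (f : Filling) : ℕ := f.flatten.foldr max 0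

/-- The monomial `x_T` of a colored immaculate tableau `T = f` of shape `I`:
for `T` of type `B = (u_1, …, u_j)` it is `x_{u_1,1} x_{u_2,2} ⋯ x_{u_j,j}`
(empty words are skipped). -/
def monoOf (I : Sentence A) (f : Filling) : Mono A :=
  let vs := ((List.range (maxEntry f)).map (· + 1)).filter (fun v => !(typeWord I f v).isEmpty)
  (vs.map (typeWord I f), vs)

/-- The colored dual immaculate function `𝔖*_J = Σ_T x_T`, the sum of the monomials of all
colored immaculate tableaux `T` of shape `J` (its coefficient at a monomial `m` is the
number of such tableaux with `x_T = m`). -/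
noncomputable def dualImm (J : Sentence A) : QSymA A := fun m =>
  (Set.ncard {f : Filling | IsCIT J f ∧ monoOf J f = m} : ℚ)

/-- The colored fundamental quasisymmetric function `F_I = Σ_{J ⪯ I} M_J`. -/
noncomputable def FQ (I : Sentence A) : QSymA A :=
  ∑ᶠ J ∈ {J : Sentence A | Refines J I}, MQ J

/-! ### The colored immaculate descent graph -/

/-- Edges of the colored immaculate descent graph: a directed edge from `I` to `J` (`J ≠ I`)
whenever some standard colored immaculate tableau of shape `I` has colored descent
composition `J`. -/
def IsEdge [Inhabited A] (I J : Sentence A) : Prop := J ≠ I ∧ LJC I J ≠ 0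

/-- Directed paths from `I` to `K` in the colored immaculate descent graph, recorded by
their (nonempty) lists of successive vertices; the path `[I]` is the empty path at `I`. -/
def PathsFromTo [Inhabited A] (I K : Sentence A) : Set (List (Sentence A)) :=
  {p | p.head? = some I ∧ p.getLast? = some K ∧ p.Chain' IsEdge}

/-- The signed weight `(-1)^{ℓ(𝒫)} prod(𝒫)` of a directed path `𝒫`:
`ℓ(𝒫)` is its number of edges and `prod(𝒫)` the product of its edge weights `L_{I,J}`. -/
noncomputable def pathWeight [Inhabited A] (p : List (Sentence A)) : ℚ :=
  ((-1 : ℚ)) ^ (p.length - 1) * ((p.zip p.tail).map (fun e => (LJC e.1 e.2 : ℚ))).prod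

/-- `L⁻¹_{I,K} = Σ_𝒫 (-1)^{ℓ(𝒫)} prod(𝒫)`, summed over all directed paths `𝒫`
from `I` to `K` in the colored immaculate descent graph. -/
noncomputable def Linv [Inhabited A] (I K : Sentence A) : ℚ :=
  ∑ᶠ p ∈ PathsFromTo I K, pathWeight p

/-! ### The colored noncommutative symmetric functions `NSym_A` -/

/-- A formal series over the complete homogeneous basis `{H_I}` of `NSym_A`, recorded by its
coefficient function on (weak) sentences.  `NSym_A` itself consists of the finitely
supported elements supported on genuine sentences; see `InNSym`. -/
abbrev NSymA (A : Type*) := Sentence A → ℚ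

/-- Membership in `NSym_A` proper: finitely supported, and supported on genuine sentences. -/
def InNSym (f : NSymA A) : Prop :=
  (Function.support f).Finite ∧ ∀ I, f I ≠ 0 → IsSentence I

open Classical in
/-- The colored complete homogeneous noncommutative symmetric function
`H_I = H_{w_1} ⋯ H_{w_k}`. -/
noncomputable def Hd (I : Sentence A) : NSymA A := fun J => if J = I then 1 else 0

/-- `H_w` for a single word `w`, with `H_∅ = 1`. -/
noncomputable def Hw (w : List A) : NSymA A := if w.isEmpty then Hd [] else Hd [w]

/-- Multiplication in `NSym_A` (the concatenation product, extended to series):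
`H_I · H_J = H_{I ⬝ J}`. -/
def mulN (f g : NSymA A) : NSymA A := fun I =>
  ∑ j ∈ Finset.range (I.length + 1), f (I.take j) * g (I.drop j)

/-- The duality pairing `⟨·,·⟩ : NSym_A × QSym_A → ℚ`, determined by
`⟨H_I, M_J⟩ = δ_{I,J}`: the `M_I`-coefficient of a quasisymmetric function is its
coefficient on the monomial `x_{w_1,1} x_{w_2,2} ⋯ x_{w_k,k}`. -/
noncomputable def pairNQ (G : NSymA A) (F : QSymA A) : ℚ :=
  ∑ᶠ I ∈ {I : Sentence A | IsSentence I}, G I * F (I, List.range' 1 I.length)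

/-- All ways of splitting each word of a list of words into a prefix and a suffix. -/
def splitsOf : List (List A) → List (List (List A) × List (List A))
  | [] => [([], [])]
  | w :: ws =>
      (((splitsOf ws).map (fun p =>
        (List.range (w.length + 1)).map (fun t => (w.take t :: p.1, w.drop t :: p.2))))).flatten

/-- Restriction of a candidate monomial: keep only the nonempty words together with
their indices. -/
def restrictMono (ws : List (List A)) (js : List ℕ) : Mono A :=
  let ps := (ws.zip js).filter (fun p => !p.1.isEmpty)
  (ps.map Prod.fst, ps.map Prod.snd)

/-- The product of colored quasisymmetric series: the coefficient of a monomial in `F·G`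
is the sum, over all ways of writing each of its words as a concatenation of a word of a
monomial of `F` (on the left) and a word of a monomial of `G` (on the right), of the
products of the corresponding coefficients. -/
def mulQ (F G : QSymA A) : QSymA A := fun m =>
  ((splitsOf m.1).map (fun p => F (restrictMono p.1 m.2) * G (restrictMono p.2 m.2))).sum

/-- The right perp operator `M^⊸` of `M ∈ QSym_A`, the linear operator on `NSym_A`
determined by `⟨M^⊸(H), G⟩ = ⟨H, G·M⟩`; explicitly, for the dual bases `{M_I}` and `{H_I}`,
`M^⊸(H) = Σ_I ⟨H, M_I · M⟩ H_I`. -/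
noncomputable def rperp (M : QSymA A) (H : NSymA A) : NSymA A :=
  ∑ᶠ I ∈ {I : Sentence A | IsSentence I}, pairNQ H (mulQ (MQ I) M) • Hd I

/-- The colored noncommutative Bernstein operator
`𝔹_v = Σ_u Σ_{Q : w(Q^r) = u} (-1)^{ℓ(Q)} H_{v·u} · (Σ_{S ⪰ Q} M_S^⊸)`,
where `Q` runs over all sentences, `u = w(Q^r)` is the concatenation of the words of `Q`
in reverse order, and `S` runs over all coarsenings of `Q`. -/
noncomputable def Bern (v : List A) (f : NSymA A) : NSymA A :=
  ∑ᶠ Q ∈ {Q : Sentence A | IsSentence Q},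
    ((-1 : ℚ)) ^ Q.length •
      mulN (Hw (v ++ Q.reverse.flatten))
        (∑ᶠ S ∈ {S : Sentence A | Refines Q S}, rperp (MQ S) f)

/-- The colored immaculate function `𝔖_J = 𝔹_{v_1} 𝔹_{v_2} ⋯ 𝔹_{v_h}(1)`. -/
noncomputable def ImmS (J : Sentence A) : NSymA A := J.foldr Bern (Hd [])

/-- The colored ribbon function `R_I = Σ_{J ⪰ I} (-1)^{ℓ(J) - ℓ(I)} H_J`. -/
noncomputable def Rib (I : Sentence A) : NSymA A :=
  ∑ᶠ J ∈ {J : Sentence A | Refines I J}, ((-1 : ℚ)) ^ (I.length - J.length) • Hd J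

/-- The Pieri relation `J ⊂_w K` for a sentence `J = (v_1, …, v_h)` and a word `w`:
`K = (u_1, …, u_g)` with `h ≤ g ≤ h+1` (setting `v_{h+1} = ∅`) and `u_j = v_j · q_j`
for words `q_j` (possibly empty) whose reversed concatenation `q_g ⋯ q_1` equals `w`. -/
def PieriRel (J : Sentence A) (w : List A) (K : Sentence A) : Prop :=
  J.length ≤ K.length ∧ K.length ≤ J.length + 1 ∧
  ∃ q : List (List A), q.length = K.length ∧ q.reverse.flatten = w ∧
    ∀ j < K.length, K.getD j [] = J.getD j [] ++ q.getD j []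

/-- Right containment of a weak sentence `K` in `J`: same length, and each word of `K` is a
suffix of the corresponding word of `J`. -/
def RightContained (K J : Sentence A) : Prop :=
  K.length = J.length ∧ ∀ i < J.length, (K.getD i []).IsSuffix (J.getD i [])

/-- The weak sentence `J/_R K`: remove each word of `K` from the right end of the
corresponding word of `J`. -/
def rightQuot (J K : Sentence A) : Sentence A :=
  List.zipWith (fun v u => v.take (v.length - u.length)) J K

/-- Left containment `J ⊆_L I`: `ℓ(J) ≤ ℓ(I)` and each word of `J` is a prefix of the
corresponding word of `I`. -/
def LeftContained (J I : Sentence A) : Prop :=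
  J.length ≤ I.length ∧ ∀ i < J.length, (J.getD i []).IsPrefix (I.getD i [])

/-- A skew colored immaculate tableau of shape `I/J`: a filling of the active boxes
(the `i`-th row keeps the last `|w_i| - |v_i|` boxes) with positive integers, rows weakly
increasing left to right, and the entries in the (active part of the) first column of `I`
strictly increasing top to bottom. -/
def IsSkewCIT (I J : Sentence A) (f : Filling) : Prop :=
  f.map List.length =
    (List.range I.length).map (fun i => (I.getD i []).length - (J.getD i []).length) ∧
  (∀ row ∈ f, row.Chain' (· ≤ ·)) ∧
  ((List.range I.length).filterMap
    (fun i => if (J.getD i []).length = 0 then (f.getD i []).head? else none)).Chain' (· < ·) ∧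
  (∀ x ∈ f.flatten, 1 ≤ x)

/-- The word of the type of a skew tableau at value `v`: the colors of the active boxes with
entry `v`, read left to right, bottom to top. -/
def skewTypeWord (I J : Sentence A) (f : Filling) (v : ℕ) : List A :=
  (((List.range I.length).reverse).map (fun i =>
    rowWith ((I.getD i []).drop (J.getD i []).length) (f.getD i []) v)).flatten

/-- `SkewHasType I J f K` : the skew tableau `f` of shape `I/J` has type `K`. -/
def SkewHasType (I J : Sentence A) (f : Filling) (K : Sentence A) : Prop :=
  ∀ v, 1 ≤ v → skewTypeWord I J f v = K.getD (v - 1) []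

/-! ### The complement involution `ψ` and the row-strict functions -/

/-- The complement `I^c` of a sentence: the unique sentence with the same maximal word
that splits exactly where `I` does not. -/
def complSent (I : Sentence A) : Sentence A :=
  let w := I.flatten
  let n := w.length
  if n = 0 then []
  else
    let splits := (((wl I).scanl (· + ·) 0).drop 1).dropLast
    let csplits := (List.range' 1 (n - 1)).filter (fun i => !(splits.contains i))
    splitByComp w (compOf csplits n)

/-- The `M_I`-coefficient of a colored quasisymmetric function. -/
noncomputable def coeffM (G : QSymA A) (I : Sentence A) : ℚ := G (I, List.range' 1 I.length)

/-- The image of `M_I` under `ψ`, via `M_I = Σ_{J ⪯ I} (-1)^{ℓ(J)-ℓ(I)} F_J` and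
`ψ(F_J) = F_{J^c}`. -/
noncomputable def psiM (I : Sentence A) : QSymA A :=
  ∑ᶠ J ∈ {J : Sentence A | Refines J I}, ((-1 : ℚ)) ^ (J.length - I.length) • FQ (complSent J)

/-- The linear involution `ψ` of `QSym_A`, determined by `ψ(F_I) = F_{I^c}`. -/
noncomputable def psiQ (G : QSymA A) : QSymA A :=
  ∑ᶠ I ∈ {I : Sentence A | IsSentence I}, coeffM G I • psiM I

/-- A colored row-strict immaculate tableau of shape `I`: entries strictly increase left to
right along each row and weakly increase top to bottom down the first column. -/
def IsCRSIT (I : Sentence A) (f : Filling) : Prop :=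
  f.map List.length = I.map List.length ∧
  (∀ row ∈ f, row.Chain' (· < ·)) ∧
  (f.filterMap List.head?).Chain' (· ≤ ·) ∧
  (∀ x ∈ f.flatten, 1 ≤ x)

/-- The word of the type of a row-strict tableau at value `v`: the colors of the boxes with
entry `v`, read left to right, top to bottom. -/
def rsTypeWord (I : Sentence A) (f : Filling) (v : ℕ) : List A :=
  ((I.zip f).map (fun p => rowWith p.1 p.2 v)).flatten

/-- The monomial `x_T` of a colored row-strict immaculate tableau. -/
def rsMonoOf (I : Sentence A) (f : Filling) : Mono A :=
  let vs := ((List.range (maxEntry f)).map (· + 1)).filter (fun v => !(rsTypeWord I f v).isEmpty)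
  (vs.map (rsTypeWord I f), vs)

/-- The colored row-strict dual immaculate function `ℛ𝔖*_J = Σ_T x_T`, summed over all
colored row-strict immaculate tableaux `T` of shape `J`. -/
noncomputable def rsDualImm (J : Sentence A) : QSymA A := fun m =>
  (Set.ncard {f : Filling | IsCRSIT J f ∧ rsMonoOf J f = m} : ℚ)

/-- `α ⪰ β` in the reverse lexicographic order on compositions: at the first index where
they differ, `α` has the *smaller* entry (padding with zeros). -/
def RevLexGE (α β : List ℕ) : Prop :=
  α = β ∨ ∃ i, (∀ j < i, α.getD j 0 = β.getD j 0) ∧ α.getD i 0 < β.getD i 0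

/-! ### Uncolored (ordinary) versions, for `QSym` -/

namespace Uncolored

/-- A composition: a list of positive integers. -/
def IsComposition (α : List ℕ) : Prop := ∀ a ∈ α, 1 ≤ a

/-- `β ⪯ α`: the composition `α` is obtained by summing adjacent parts of `β`. -/
def RefinesC (β α : List ℕ) : Prop :=
  ∃ P : List (List ℕ), (∀ p ∈ P, p ≠ []) ∧ P.flatten = β ∧ P.map List.sum = α

/-- A monomial `x_{i_1}^{a_1} ⋯ x_{i_m}^{a_m}` recorded by its exponents and its
strictly increasing positive indices. -/
abbrev MonoU := List ℕ × List ℕ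

/-- A quasisymmetric "series", recorded by its coefficient function on monomials.
`QSym` is the span of the monomial functions `MU α` inside this space. -/
abbrev QSymU := MonoU → ℚ

/-- Validity of a monomial: matching lengths, strictly increasing positive indices,
positive exponents. -/
def ValidMonoU (m : MonoU) : Prop :=
  m.1.length = m.2.length ∧ m.2.Chain' (· < ·) ∧ (∀ j ∈ m.2, 1 ≤ j) ∧ ∀ a ∈ m.1, 1 ≤ a

open Classical in
/-- The monomial quasisymmetric function `M_α`. -/
noncomputable def MU (α : List ℕ) : QSymU := fun m =>
  if m.1 = α ∧ ValidMonoU m then 1 else 0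

/-- The fundamental quasisymmetric function `F_α = Σ_{β ⪯ α} M_β`. -/
noncomputable def FU (α : List ℕ) : QSymU :=
  ∑ᶠ β ∈ {β : List ℕ | RefinesC β α}, MU β

/-- An immaculate tableau of shape `α`: positive integer entries, rows weakly increasing
left to right, first column strictly increasing top to bottom. -/
def IsIT (α : List ℕ) (f : Filling) : Prop :=
  f.map List.length = α ∧
  (∀ row ∈ f, row.Chain' (· ≤ ·)) ∧
  (f.filterMap List.head?).Chain' (· < ·) ∧
  (∀ x ∈ f.flatten, 1 ≤ x)

/-- The number of boxes of `f` with entry `v`. -/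
def countOf (f : Filling) (v : ℕ) : ℕ := (f.flatten.filter (fun x => x == v)).length

/-- The monomial `x^T` of an immaculate tableau `T` of type `β`:
`x_1^{β_1} ⋯ x_h^{β_h}` (zero exponents skipped). -/
def monoOfU (f : Filling) : MonoU :=
  let vs := ((List.range (maxEntry f)).map (· + 1)).filter (fun v => decide (countOf f v ≠ 0))
  (vs.map (countOf f), vs)

/-- The dual immaculate function `𝔖*_α = Σ_T x^T`, summed over all immaculate tableaux
of shape `α`. -/
noncomputable def dualImmU (α : List ℕ) : QSymU := fun m =>
  (Set.ncard {f : Filling | IsIT α f ∧ monoOfU f = m} : ℚ)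

/-- The descent composition `co(U)` of a standard immaculate tableau. -/
def descComp (f : Filling) : List ℕ :=
  if nBoxes f = 0 then [] else compOf (descList f) (nBoxes f)

/-- `L_{α,β}`: the number of standard immaculate tableaux of shape `α` with descent
composition `β`. -/
noncomputable def LU (α β : List ℕ) : ℕ :=
  Set.ncard {f : Filling | IsIT α f ∧ IsStandardF f ∧ descComp f = β}

/-- Edges of the immaculate descent graph `𝔇^n`. -/
def IsEdgeU (α β : List ℕ) : Prop := β ≠ α ∧ LU α β ≠ 0

/-- Directed paths from `α` to `β` in the immaculate descent graph, recorded by their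
lists of successive vertices; `[α]` is the empty path at `α`. -/
def PathsU (α β : List ℕ) : Set (List (List ℕ)) :=
  {p | p.head? = some α ∧ p.getLast? = some β ∧ p.Chain' IsEdgeU}

/-- The signed weight `(-1)^{ℓ(𝒫)} prod(𝒫)` of a path. -/
noncomputable def pathWeightU (p : List (List ℕ)) : ℚ :=
  ((-1 : ℚ)) ^ (p.length - 1) * ((p.zip p.tail).map (fun e => (LU e.1 e.2 : ℚ))).prod

/-- `L⁻¹_{α,β} = Σ_𝒫 (-1)^{ℓ(𝒫)} prod(𝒫)`, over directed paths from `α` to `β` in `𝔇^n`. -/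
noncomputable def LinvU (α β : List ℕ) : ℚ :=
  ∑ᶠ p ∈ PathsU α β, pathWeightU p

end Uncolored

end ColoredImm

namespace ColoredImm

section PartOne
variable {A : Type*}

theorem isSentence_nil : IsSentence ([] : Sentence A) := by intro w hw; simp at hw

theorem isSentence_append {I J : Sentence A} :
    IsSentence (I ++ J) ↔ IsSentence I ∧ IsSentence J := by
  unfold IsSentence
  simp only [List.mem_append]
  constructor
  · intro h; exact ⟨fun w hw => h w (Or.inl hw), fun w hw => h w (Or.inr hw)⟩
  · rintro ⟨h1, h2⟩ w (hw | hw)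
    · exact h1 w hw
    · exact h2 w hw

theorem isSentence_cons {w : List A} {J : Sentence A} :
    IsSentence (w :: J) ↔ w ≠ [] ∧ IsSentence J := by
  unfold IsSentence
  simp

theorem sentence_flatten_nil {Q : Sentence A} (h : IsSentence Q) (hf : Q.flatten = []) :
    Q = [] := by
  cases Q with
  | nil => rfl
  | cons w Q =>
    rw [isSentence_cons] at h
    simp at hf
    exact absurd hf.1 h.1

/-- Sentences with the same flattening, appended with more sentences, are determined. -/
theorem sentence_append_inj {Q Q' R R' : Sentence A} (hQ : IsSentence Q) (hQ' : IsSentence Q')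
    (hf : Q.flatten = Q'.flatten) (h : Q ++ R = Q' ++ R') : Q = Q' ∧ R = R' := by
  rcases List.append_eq_append_iff.1 h with ⟨X, h1, h2⟩ | ⟨X, h1, h2⟩
  · subst h1
    have hX := (isSentence_append.1 hQ').2
    have : X.flatten = [] := by
      rw [List.flatten_append] at hf
      simpa using hf
    have := sentence_flatten_nil hX this
    subst this
    simpa using h2
  · subst h1
    have hX := (isSentence_append.1 hQ).2
    have : X.flatten = [] := by
      rw [List.flatten_append] at hf
      simpa using hf
    have := sentence_flatten_nil hX this
    subst this
    simpa using h2.symm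

theorem comps_finite_aux (n : ℕ) : ∀ t : List A, t.length ≤ n →
    {Q : Sentence A | IsSentence Q ∧ Q.flatten = t}.Finite := by
  induction n with
  | zero =>
    intro t ht
    apply (Set.finite_singleton ([] : Sentence A)).subset
    rintro Q ⟨h1, h2⟩
    have : t = [] := by simpa using ht
    subst this
    exact sentence_flatten_nil h1 h2
  | succ n ih =>
    intro t ht
    have hfin : (insert ([] : Sentence A) (⋃ i ∈ Finset.range t.length,
        (fun Q : Sentence A => Q ++ [t.drop i]) ''
          {Q : Sentence A | IsSentence Q ∧ Q.flatten = t.take i})).Finite := by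
      apply Set.Finite.insert
      apply Set.Finite.biUnion (Finset.finite_toSet _)
      intro i hi
      apply Set.Finite.image
      apply ih
      simp at hi
      simp; omega
    apply hfin.subset
    rintro Q ⟨h1, h2⟩
    rcases List.eq_nil_or_concat' Q with rfl | ⟨Q', s, rfl⟩
    · simp
    · right
      rw [isSentence_append] at h1
      have hs : s ≠ [] := h1.2 s (by simp)
      have hs' : 0 < s.length := List.length_pos_iff.2 hs
      simp only [List.flatten_append, List.flatten_cons, List.flatten_nil, List.append_nil] at h2
      subst h2
      simp only [Set.mem_iUnion]
      refine ⟨Q'.flatten.length, ?_, Q', ⟨h1.1, by simp⟩, by simp⟩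
      simp only [Finset.mem_range, List.length_append]; omega

/-- The finite set of all sentences with flattening `t`. -/
noncomputable def comps (t : List A) : Finset (Sentence A) :=
  (comps_finite_aux t.length t le_rfl).toFinset

theorem mem_comps {t : List A} {Q : Sentence A} :
    Q ∈ comps t ↔ IsSentence Q ∧ Q.flatten = t := by
  simp [comps]

theorem comps_nil : comps ([] : List A) = {[]} := by
  ext Q
  rw [mem_comps, Finset.mem_singleton]
  constructor
  · rintro ⟨h1, h2⟩; exact sentence_flatten_nil h1 h2
  · rintro rfl; exact ⟨isSentence_nil, rfl⟩

theorem sum_comps {M : Type*} [AddCommMonoid M] (t : List A) (ht : t ≠ []) (F : Sentence A → M) :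
    ∑ Q ∈ comps t, F Q =
      ∑ i ∈ Finset.range t.length, ∑ Q ∈ comps (t.take i), F (Q ++ [t.drop i]) := by
  classical
  rw [Finset.sum_sigma']
  symm
  refine Finset.sum_bij (fun x _ => x.2 ++ [t.drop x.1]) ?_ ?_ ?_ ?_
  · rintro ⟨i, Q⟩ h
    simp only [Finset.mem_sigma, Finset.mem_range, mem_comps] at h
    rw [mem_comps, isSentence_append]
    refine ⟨⟨h.2.1, ?_⟩, ?_⟩
    · rw [isSentence_cons]
      refine ⟨?_, isSentence_nil⟩
      simp; exact h.1
    · simp [h.2.2]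
  · rintro ⟨i, Q⟩ h ⟨j, Q'⟩ h' heq
    simp only [Finset.mem_sigma, Finset.mem_range, mem_comps] at h h'
    have := List.append_inj' heq rfl
    have h3 : i = j := by
      have := congrArg List.length (List.cons.inj this.2).1
      simp at this
      omega
    subst h3
    have h4 : Q = Q' := this.1
    rw [h4]
  · intro Q h
    rw [mem_comps] at h
    obtain ⟨h1, h2⟩ := h
    rcases List.eq_nil_or_concat' Q with rfl | ⟨Q', s, rfl⟩
    · simp at h2; exact absurd h2 ht
    · rw [isSentence_append] at h1
      have hs : s ≠ [] := h1.2 s (by simp)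
      have hs' : 0 < s.length := List.length_pos_iff.2 hs
      simp only [List.flatten_append, List.flatten_cons, List.flatten_nil, List.append_nil] at h2
      subst h2
      refine ⟨⟨Q'.flatten.length, Q'⟩, ?_, by simp⟩
      simp only [Finset.mem_sigma, Finset.mem_range, mem_comps]
      refine ⟨by simp only [List.length_append]; omega, h1.1, by simp⟩
  · rintro ⟨i, Q⟩ h
    rfl

/-- The key alternating cancellation. -/
theorem alt_cancel {M : Type*} [AddCommGroup M] [Module ℚ M] (x : List A) (g : List A → M) :
    ∑ j ∈ Finset.range (x.length + 1), ∑ Q ∈ comps (x.take j),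
      ((-1 : ℚ) ^ Q.length) • g (x.drop j ++ Q.reverse.flatten) = if x = [] then g [] else 0 := by
  split_ifs with hx
  · subst hx
    simp [comps_nil]
  · rw [Finset.sum_range_succ]
    have : x.take x.length = x := by simp
    rw [this, sum_comps x hx, ← Finset.sum_add_distrib]
    apply Finset.sum_eq_zero
    intro i _
    rw [← Finset.sum_add_distrib]
    apply Finset.sum_eq_zero
    intro Q _
    simp [pow_succ]

open Classical in
/-- Refinements (into genuine sentences) of a weak sentence. -/
noncomputable def refs (S : Sentence A) : Finset (Sentence A) :=
  (comps S.flatten).filter (fun Q => ∃ P : List (Sentence A), P.map List.flatten = S ∧ P.flatten = Q)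

theorem mem_refs {S Q : Sentence A} :
    Q ∈ refs S ↔ IsSentence Q ∧ ∃ P : List (Sentence A), P.map List.flatten = S ∧ P.flatten = Q := by
  classical
  unfold refs
  rw [Finset.mem_filter, mem_comps]
  constructor
  · rintro ⟨⟨h1, _⟩, h2⟩; exact ⟨h1, h2⟩
  · rintro ⟨h1, P, h2, h3⟩
    refine ⟨⟨h1, ?_⟩, P, h2, h3⟩
    rw [← h2, ← h3, List.flatten_flatten]

theorem refs_flatten {S Q : Sentence A} (h : Q ∈ refs S) : Q.flatten = S.flatten := by
  classical
  unfold refs at h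
  rw [Finset.mem_filter, mem_comps] at h
  exact h.1.2

theorem refs_nil : refs ([] : Sentence A) = {[]} := by
  ext Q
  rw [mem_refs, Finset.mem_singleton]
  constructor
  · rintro ⟨_, P, h1, h2⟩
    simp at h1
    subst h1; simpa using h2.symm
  · rintro rfl; exact ⟨isSentence_nil, [], rfl, rfl⟩

theorem mem_refs_flattenWS {S Q : Sentence A} :
    Q ∈ refs S ↔ IsSentence Q ∧ Refines Q (flattenWS S) := by
  rw [mem_refs]
  refine and_congr_right fun hQ => ?_
  constructor
  · rintro ⟨P, h1, h2⟩
    refine ⟨P.filter (fun p => !p.isEmpty), by simp, ?_, ?_⟩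
    · rw [← h2]
      exact List.flatten_filter_not_isEmpty
    · unfold flattenWS
      rw [← h1, List.filter_map]
      congr 1
      apply List.filter_congr
      intro p hp
      have hps : IsSentence p := by
        intro w hw
        exact hQ w (by rw [← h2]; exact List.mem_flatten.2 ⟨p, hp, hw⟩)
      cases p with
      | nil => simp
      | cons w p =>
        rw [isSentence_cons] at hps
        cases w with
        | nil => simp at hps
        | cons => simp
  · rintro ⟨P, h0, h1, h2⟩
    clear hQ h0
    induction S generalizing P Q with
    | nil => 
      simp [flattenWS] at h2
      subst h2
      exact ⟨[], rfl, by simpa using h1⟩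
    | cons s S ih =>
      cases s with
      | nil =>
        obtain ⟨P', h3, h4⟩ := ih P h1 (by rw [h2]; simp [flattenWS])
        exact ⟨[] :: P', by simp [h3], by simpa using h4⟩
      | cons a s =>
        have : flattenWS ((a :: s) :: S) = (a :: s) :: flattenWS S := by simp [flattenWS]
        rw [this] at h2
        cases P with
        | nil => simp at h2
        | cons p P =>
          simp only [List.map_cons, List.cons.injEq] at h2
          obtain ⟨P', h3, h4⟩ := ih P rfl h2.2
          exact ⟨p :: P', by simp [h3, h2.1], by simp [h4, ← h1]⟩

theorem sum_refs_snoc {M : Type*} [AddCommMonoid M] (S : Sentence A) (s : List A)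
    (F : Sentence A → M) :
    ∑ Q ∈ refs (S ++ [s]), F Q = ∑ Q ∈ refs S, ∑ Q1 ∈ comps s, F (Q ++ Q1) := by
  classical
  rw [← Finset.sum_product']
  symm
  refine Finset.sum_bij (fun x _ => x.1 ++ x.2) ?_ ?_ ?_ ?_
  · rintro ⟨Q, Q1⟩ h
    simp only [Finset.mem_product, mem_refs, mem_comps] at h
    obtain ⟨⟨h1, P, h2, h3⟩, h4, h5⟩ := h
    rw [mem_refs, isSentence_append]
    exact ⟨⟨h1, h4⟩, P ++ [Q1], by simp [h2, h5], by simp [h3]⟩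
  · rintro ⟨Q, Q1⟩ h ⟨Q', Q1'⟩ h' heq
    simp only [Finset.mem_product] at h h'
    have := sentence_append_inj (mem_refs.1 h.1).1 (mem_refs.1 h'.1).1
      ((refs_flatten h.1).trans (refs_flatten h'.1).symm) heq
    simpa using this
  · intro Q h
    rw [mem_refs] at h
    obtain ⟨h1, P, h2, h3⟩ := h
    rcases List.eq_nil_or_concat' P with rfl | ⟨P', q, rfl⟩
    · simp at h2
    · simp only [List.map_append, List.map_cons, List.map_nil] at h2
      have h4 := List.append_inj' h2 rfl
      simp only [List.flatten_append, List.flatten_cons, List.flatten_nil, List.append_nil] at h3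
      subst h3
      rw [isSentence_append] at h1
      refine ⟨(P'.flatten, q), ?_, rfl⟩
      simp only [Finset.mem_product, mem_refs, mem_comps]
      exact ⟨⟨h1.1, P', h4.1, rfl⟩, h1.2, by simpa using h4.2⟩
  · rintro ⟨Q, Q1⟩ h
    rfl

/-- Sum over all prefix/suffix splits of the words of `K`. -/
def SS {M : Type*} [AddCommMonoid M] (K : Sentence A) (F : Sentence A × Sentence A → M) : M :=
  ((splitsOf K).map F).sum

theorem SS_nil {M : Type*} [AddCommMonoid M] (F : Sentence A × Sentence A → M) :
    SS [] F = F ([], []) := by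
  simp [SS, splitsOf]

theorem list_sum_map_range {M : Type*} [AddCommMonoid M] (n : ℕ) (f : ℕ → M) :
    ((List.range n).map f).sum = ∑ i ∈ Finset.range n, f i := by
  induction n with
  | zero => simp
  | succ n ih => rw [List.range_succ, Finset.sum_range_succ]; simp [ih]

theorem SS_cons {M : Type*} [AddCommMonoid M] (w : List A) (K : Sentence A)
    (F : Sentence A × Sentence A → M) :
    SS (w :: K) F = SS K (fun p => ∑ t ∈ Finset.range (w.length + 1),
      F (w.take t :: p.1, w.drop t :: p.2)) := by
  unfold SS
  rw [splitsOf, List.map_flatten, List.sum_flatten, List.map_map, List.map_map]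
  congr 1
  apply List.map_congr_left
  intro p _
  simp only [Function.comp, List.map_map]
  rw [← list_sum_map_range]
  rfl

theorem SS_snoc {M : Type*} [AddCommMonoid M] (K : Sentence A) (u : List A)
    (F : Sentence A × Sentence A → M) :
    SS (K ++ [u]) F = SS K (fun p => ∑ t ∈ Finset.range (u.length + 1),
      F (p.1 ++ [u.take t], p.2 ++ [u.drop t])) := by
  induction K generalizing F with
  | nil => simp [SS_cons, SS_nil]
  | cons w K ih =>
    rw [List.cons_append, SS_cons, ih, SS_cons]
    congr 1
    funext p
    rw [Finset.sum_comm]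
    rfl

theorem SS_congr {M : Type*} [AddCommMonoid M] (K : Sentence A)
    {F G : Sentence A × Sentence A → M} (h : ∀ p ∈ splitsOf K, F p = G p) : SS K F = SS K G := by
  unfold SS
  rw [List.map_congr_left h]

theorem SS_sum {M ι : Type*} [AddCommMonoid M] (K : Sentence A) (s : Finset ι)
    (F : ι → Sentence A × Sentence A → M) :
    SS K (fun p => ∑ i ∈ s, F i p) = ∑ i ∈ s, SS K (F i) := by
  unfold SS
  induction splitsOf K with
  | nil => simp
  | cons a l ih => simp [ih, Finset.sum_add_distrib]

theorem SS_map {M N : Type*} [AddCommMonoid M] [AddCommMonoid N] [Module ℚ M] [Module ℚ N]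
    (K : Sentence A) (φ : M →ₗ[ℚ] N)
    (F : Sentence A × Sentence A → M) :
    φ (SS K F) = SS K (fun p => φ (F p)) := by
  unfold SS
  rw [map_list_sum, List.map_map]
  rfl

theorem SS_smul {M : Type*} [AddCommMonoid M] [Module ℚ M]
    (K : Sentence A) (c : ℚ) (F : Sentence A × Sentence A → M) :
    c • (SS K F) = SS K (fun p => c • (F p)) := 
  SS_map K (LinearMap.lsmul ℚ M c) F

theorem splitsOf_length {K : Sentence A} {p : Sentence A × Sentence A} (h : p ∈ splitsOf K) :
    p.1.length = K.length ∧ p.2.length = K.length := by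
  induction K generalizing p with
  | nil => simp [splitsOf] at h; simp [h]
  | cons w K ih =>
    simp only [splitsOf, List.mem_flatten, List.mem_map] at h
    obtain ⟨l, ⟨q, hq, rfl⟩, h⟩ := h
    simp only [List.mem_map] at h
    obtain ⟨t, _, rfl⟩ := h
    have := ih hq
    simp [this.1, this.2]

/-- `H_u` is `H_{cw u}`. -/
def cw (u : List A) : Sentence A := if u.isEmpty then [] else [u]

theorem isSentence_cw (u : List A) : IsSentence (cw u) := by
  unfold cw
  cases u with
  | nil => exact isSentence_nil
  | cons a u => simp [isSentence_cons, isSentence_nil]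

theorem flattenWS_snoc (p : Sentence A) (u : List A) :
    flattenWS (p ++ [u]) = flattenWS p ++ cw u := by
  unfold flattenWS cw
  cases u <;> simp

theorem isSentence_flattenWS (p : Sentence A) : IsSentence (flattenWS p) := by
  intro w hw
  unfold flattenWS at hw
  simp at hw
  exact hw.2

end PartOne

section PartTwo
variable {A : Type*}

/-- Finitely supported version of the complete homogeneous expansions. -/
abbrev NF (A : Type*) := Sentence A →₀ ℚ

/-- Bernstein operator applied to `H_K`. -/
noncomputable def bH (v : List A) (K : Sentence A) : NF A :=
  SS K (fun p => ∑ Q ∈ refs p.2, ((-1 : ℚ) ^ Q.length) •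
    Finsupp.single (cw (v ++ Q.reverse.flatten) ++ flattenWS p.1) (1 : ℚ))

/-- Right multiplication by `H_w`. -/
noncomputable def opR (w : List A) : NF A →ₗ[ℚ] NF A :=
  Finsupp.lmapDomain ℚ ℚ (fun K => K ++ cw w)

theorem opR_single (w : List A) (K : Sentence A) (c : ℚ) :
    opR w (Finsupp.single K c) = Finsupp.single (K ++ cw w) c := by
  simp [opR]

/-- Linear Bernstein operator. -/
noncomputable def Bf (v : List A) : NF A →ₗ[ℚ] NF A := Finsupp.linearCombination ℚ (bH v)

theorem Bf_single (v : List A) (K : Sentence A) : Bf v (Finsupp.single K 1) = bH v K := by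
  simp [Bf]

theorem bH_nil (v : List A) : bH v [] = Finsupp.single (cw v) 1 := by
  simp [bH, SS_nil, refs_nil, flattenWS]

theorem bH_snoc (v : List A) (K : Sentence A) (w : List A) :
    bH v (K ++ [w]) = ∑ t ∈ Finset.range (w.length + 1), ∑ Q1 ∈ comps (w.drop t),
      ((-1 : ℚ) ^ Q1.length) • opR (w.take t) (bH (v ++ Q1.reverse.flatten) K) := by
  unfold bH
  rw [SS_snoc, SS_sum]
  apply Finset.sum_congr rfl
  intro t _
  simp only [SS_map, SS_smul]
  rw [← SS_sum]
  apply SS_congr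
  intro p _
  rw [sum_refs_snoc, Finset.sum_comm]
  apply Finset.sum_congr rfl
  intro Q1 _
  rw [map_sum, Finset.smul_sum]
  apply Finset.sum_congr rfl
  intro Q _
  rw [map_smul, opR_single, smul_smul, flattenWS_snoc]
  simp only [List.length_append, List.reverse_append, List.flatten_append, List.append_assoc]
  rw [pow_add, mul_comm]

theorem opR_nil (F : NF A) : opR [] F = F := by
  simp only [opR, cw, List.isEmpty_nil, if_true, List.append_nil, Finsupp.lmapDomain_apply]
  exact Finsupp.mapDomain_id

theorem bH_cw (v : List A) (K : Sentence A) (w : List A) :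
    bH v (K ++ cw w) = ∑ t ∈ Finset.range (w.length + 1), ∑ Q1 ∈ comps (w.drop t),
      ((-1 : ℚ) ^ Q1.length) • opR (w.take t) (bH (v ++ Q1.reverse.flatten) K) := by
  cases w with
  | nil => simp [cw, comps_nil, opR_nil]
  | cons a w => rw [← bH_snoc]; simp [cw]

theorem bern_pieri_single (v w : List A) (K : Sentence A) :
    opR w (bH v K) =
      ∑ i ∈ Finset.range (w.length + 1), bH (v ++ w.drop i) (K ++ cw (w.take i)) := by
  simp only [bH_cw]
  have h1 : ∀ i ∈ Finset.range (w.length + 1),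
      (∑ t ∈ Finset.range ((w.take i).length + 1), ∑ Q1 ∈ comps ((w.take i).drop t),
        ((-1 : ℚ) ^ Q1.length) • opR ((w.take i).take t)
          (bH (v ++ w.drop i ++ Q1.reverse.flatten) K)) =
      ∑ t ∈ Finset.range (i + 1), ∑ Q1 ∈ comps ((w.drop t).take (i - t)),
        ((-1 : ℚ) ^ Q1.length) • opR (w.take t)
          (bH (v ++ ((w.drop t).drop (i - t) ++ Q1.reverse.flatten)) K) := by
    intro i hi
    rw [Finset.mem_range] at hi
    have : (w.take i).length = i := by simp; omega
    rw [this]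
    apply Finset.sum_congr rfl
    intro t ht
    rw [Finset.mem_range] at ht
    rw [List.drop_take, List.take_take, List.drop_drop, show min t i = t by omega,
      show t + (i - t) = i by omega]
    simp only [List.append_assoc]
  rw [Finset.sum_congr rfl h1]
  rw [Finset.sum_range_diag_flip (w.length + 1) (fun t j => ∑ Q1 ∈ comps ((w.drop t).take j),
        ((-1 : ℚ) ^ Q1.length) • opR (w.take t)
          (bH (v ++ ((w.drop t).drop j ++ Q1.reverse.flatten)) K))]
  have h2 : ∀ t ∈ Finset.range (w.length + 1),
      (∑ j ∈ Finset.range (w.length + 1 - t), ∑ Q1 ∈ comps ((w.drop t).take j),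
        ((-1 : ℚ) ^ Q1.length) • opR (w.take t)
          (bH (v ++ ((w.drop t).drop j ++ Q1.reverse.flatten)) K)) =
      if w.drop t = [] then opR (w.take t) (bH (v ++ []) K) else 0 := by
    intro t ht
    rw [Finset.mem_range] at ht
    rw [← alt_cancel (w.drop t) (fun u => opR (w.take t) (bH (v ++ u) K)),
      show (w.drop t).length + 1 = w.length + 1 - t by simp; omega]
  rw [Finset.sum_congr rfl h2, Finset.sum_range_succ, Finset.sum_eq_zero]
  · simp
  · intro t ht
    rw [Finset.mem_range] at ht
    rw [if_neg]
    simp; exact ht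

theorem bern_pieri (v w : List A) (F : NF A) :
    opR w (Bf v F) =
      ∑ i ∈ Finset.range (w.length + 1), Bf (v ++ w.drop i) (opR (w.take i) F) := by
  have : (opR w) ∘ₗ (Bf v) =
      ∑ i ∈ Finset.range (w.length + 1), (Bf (v ++ w.drop i)) ∘ₗ (opR (w.take i)) := by
    apply Finsupp.lhom_ext'
    intro K
    apply LinearMap.ext_ring
    simp only [LinearMap.comp_apply, Finsupp.lsingle_apply, LinearMap.sum_apply, Bf_single,
      opR_single]
    exact bern_pieri_single v w K
  have h2 := congrArg (fun φ => φ F) this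
  simpa [LinearMap.sum_apply] using h2

/-- Add the letter `x.1` at the end of row `x.2` (creating a new row if needed). -/
def addL (J : Sentence A) (x : A × ℕ) : Sentence A :=
  if x.2 < J.length then J.modify x.2 (fun w => w ++ [x.1]) else J ++ [[x.1]]

/-- Raise the row index by one. -/
def up (x : A × ℕ) : A × ℕ := (x.1, x.2 + 1)

/-- Row index zero. -/
def z0 (a : A) : A × ℕ := (a, 0)

theorem up_inj : Function.Injective (up : A × ℕ → A × ℕ) := by
  rintro ⟨a, i⟩ ⟨b, j⟩ h
  simpa [up] using h

theorem z0_inj : Function.Injective (z0 : A → A × ℕ) := by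
  intro a b h
  simpa [z0] using h

theorem addL_up (v : List A) (J : Sentence A) (x : A × ℕ) :
    addL (v :: J) (up x) = v :: addL J x := by
  unfold addL up
  simp
  split_ifs <;> rfl

theorem foldl_up (v : List A) (J : Sentence A) (t : List (A × ℕ)) :
    (t.map up).foldl addL (v :: J) = v :: t.foldl addL J := by
  induction t generalizing J with
  | nil => rfl
  | cons x t ih => simp [addL_up, ih]

theorem foldl_z0 (v : List A) (J : Sentence A) (s : List A) :
    (s.map z0).foldl addL (v :: J) = (v ++ s) :: J := by
  induction s generalizing v with
  | nil => simp
  | cons a s ih => 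
    have : addL (v :: J) (z0 a) = (v ++ [a]) :: J := by simp [addL, z0]
    simp [this, ih]

theorem foldl_z0_nil (s : List A) :
    (s.map z0).foldl addL [] = cw s := by
  cases s with
  | nil => rfl
  | cons a s => 
    have : addL [] (z0 a) = [[a]] := by simp [addL, z0]
    simp only [List.map_cons, List.foldl_cons, this]
    rw [foldl_z0]
    rfl

open Classical in
/-- Weakly decreasing row sequences for the word `w`, with rows at most `h`. -/
noncomputable def tset : ℕ → List A → Finset (List (A × ℕ))
  | 0, w => {w.map z0}
  | h + 1, w => (Finset.range (w.length + 1)).biUnion fun i =>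
      (tset h (w.take i)).image (fun t => t.map up ++ (w.drop i).map z0)

theorem dec_split (t : List (A × ℕ)) (ht : t.Pairwise (fun x y => y.2 ≤ x.2)) :
    ∃ (t' : List (A × ℕ)) (s : List A), t = t'.map up ++ s.map z0 := by
  induction t with
  | nil => exact ⟨[], [], rfl⟩
  | cons x t ih =>
    rw [List.pairwise_cons] at ht
    obtain ⟨a, k⟩ := x
    cases k with
    | zero =>
      refine ⟨[], a :: t.map Prod.fst, ?_⟩
      simp only [List.map_nil, List.nil_append, List.map_cons, List.map_map]
      congr 1
      conv_lhs => rw [← List.map_id t]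
      apply List.map_congr_left
      rintro ⟨b, j⟩ hb
      have := ht.1 _ hb
      simp at this
      simp [z0, this]
    | succ k =>
      obtain ⟨t', s, h⟩ := ih ht.2
      exact ⟨(a, k) :: t', s, by simp [h, up]⟩

theorem mem_tset (h : ℕ) (w : List A) (t : List (A × ℕ)) :
    t ∈ tset h w ↔ t.map Prod.fst = w ∧ t.Pairwise (fun x y => y.2 ≤ x.2) ∧ ∀ x ∈ t, x.2 ≤ h := by
  classical
  induction h generalizing w t with
  | zero =>
    rw [tset, Finset.mem_singleton]
    constructor
    · rintro rfl
      refine ⟨?_, ?_, ?_⟩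
      · simp [Function.comp_def, z0]
      · rw [List.pairwise_map]; exact List.pairwise_of_forall (fun _ _ => le_rfl)
      · simp [z0]
    · rintro ⟨rfl, _, h⟩
      rw [List.map_map]
      conv_lhs => rw [← List.map_id t]
      apply List.map_congr_left
      rintro ⟨b, j⟩ hb
      have := h _ hb
      simp at this
      simp [z0, this]
  | succ h ih =>
    rw [tset, Finset.mem_biUnion]
    simp only [Finset.mem_image, ih, Finset.mem_range]
    constructor
    · rintro ⟨i, hi, t, ⟨h1, h2, h3⟩, rfl⟩
      refine ⟨?_, ?_, ?_⟩
      · rw [List.map_append, List.map_map, List.map_map]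
        have e1 : (Prod.fst ∘ up : A × ℕ → A) = Prod.fst := rfl
        have e2 : (Prod.fst ∘ z0 : A → A) = id := rfl
        rw [e1, e2, h1]; simp
      · rw [List.pairwise_append, List.pairwise_map, List.pairwise_map]
        refine ⟨?_, ?_, ?_⟩
        · simpa [up] using h2
        · exact List.pairwise_of_forall (fun _ _ => le_rfl)
        · intro x _ y hy
          rw [List.mem_map] at hy
          obtain ⟨b, _, rfl⟩ := hy
          exact Nat.zero_le _
      · intro x hx
        rw [List.mem_append, List.mem_map, List.mem_map] at hx
        rcases hx with ⟨y, hy, rfl⟩ | ⟨y, hy, rfl⟩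
        · have := h3 y hy; simp [up]; omega
        · simp [z0]
    · rintro ⟨rfl, h2, h3⟩
      obtain ⟨t', s, rfl⟩ := dec_split t h2
      have e1 : (Prod.fst ∘ up : A × ℕ → A) = Prod.fst := rfl
      have e2 : (Prod.fst ∘ z0 : A → A) = id := rfl
      rw [List.map_append, List.map_map, List.map_map, e1, e2, List.map_id]
      refine ⟨(t'.map Prod.fst).length, ?_, t', ⟨?_, ?_, ?_⟩, ?_⟩
      · simp
      · simp
      · rw [List.pairwise_append, List.pairwise_map] at h2
        simpa [up] using h2.1
      · intro x hx
        have := h3 (up x) (by simp only [List.mem_append, List.mem_map]; exact Or.inl ⟨x, hx, rfl⟩)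
        simp [up] at this; omega
      · simp

theorem up_z0_inj {t t' : List (A × ℕ)} {s s' : List A}
    (h : t.map up ++ s.map z0 = t'.map up ++ s'.map z0) : t = t' ∧ s = s' := by
  induction t generalizing t' with
  | nil =>
    cases t' with
    | nil => simpa [z0_inj.list_map.eq_iff] using h
    | cons x t' =>
      cases s with
      | nil => simp at h
      | cons a s => simp [z0, up, Prod.ext_iff] at h
  | cons x t ih =>
    cases t' with
    | nil => 
      cases s' with
      | nil => simp at h
      | cons a s => simp [z0, up, Prod.ext_iff] at h
    | cons y t' =>
      simp only [List.map_cons, List.cons_append, List.cons.injEq] at h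
      obtain ⟨h1, h2⟩ := ih h.2
      exact ⟨by rw [up_inj h.1, h1], h2⟩

theorem sum_tset_succ {M : Type*} [AddCommMonoid M] (h : ℕ) (w : List A) (F : List (A × ℕ) → M) :
    ∑ t ∈ tset (h + 1) w, F t = ∑ i ∈ Finset.range (w.length + 1), ∑ t ∈ tset h (w.take i),
      F (t.map up ++ (w.drop i).map z0) := by
  classical
  rw [tset, Finset.sum_biUnion]
  · apply Finset.sum_congr rfl
    intro i _
    rw [Finset.sum_image]
    intro t _ t' _ heq
    exact (up_z0_inj heq).1
  · intro i hi j hj hij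
    rw [Function.onFun, Finset.disjoint_left]
    intro t ht ht'
    rw [Finset.mem_image] at ht ht'
    obtain ⟨t1, _, rfl⟩ := ht
    obtain ⟨t2, _, h2⟩ := ht'
    have h3 := congrArg List.length (up_z0_inj h2).2
    simp at hi hj h3
    omega

/-- Finitely supported colored immaculate function. -/
noncomputable def immF (J : Sentence A) : NF A :=
  J.foldr (fun v f => Bf v f) (Finsupp.single [] 1)

theorem immF_cons (v : List A) (J : Sentence A) : immF (v :: J) = Bf v (immF J) := rfl

theorem immF_cw (w : List A) : immF (cw w) = Finsupp.single (cw w) 1 := by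
  cases w with
  | nil => rfl
  | cons a w =>
    have : immF (cw (a :: w)) = Bf (a :: w) (Finsupp.single [] 1) := rfl
    rw [this, Bf_single, bH_nil]

/-- The Pieri rule. -/
theorem pieri (J : Sentence A) (w : List A) :
    opR w (immF J) = ∑ t ∈ tset J.length w, immF (t.foldl addL J) := by
  induction J generalizing w with
  | nil =>
    rw [List.length_nil, tset, Finset.sum_singleton, foldl_z0_nil, immF_cw]
    simp [immF, opR_single]
  | cons v J ih =>
    rw [immF_cons, bern_pieri, List.length_cons, sum_tset_succ]
    apply Finset.sum_congr rfl
    intro i _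
    rw [ih, map_sum]
    apply Finset.sum_congr rfl
    intro t _
    rw [List.foldl_append, foldl_up, foldl_z0, immF_cons]

end PartTwo

section PartThree
variable {A : Type*}

theorem Hd_eq_single (K : Sentence A) : (Hd K : NSymA A) = ⇑(Finsupp.single K (1 : ℚ)) := by
  classical
  funext J
  unfold Hd
  rw [Finsupp.single_apply]
  simp only [eq_comm]

theorem Hw_eq (u : List A) : (Hw u : NSymA A) = Hd (cw u) := by
  unfold Hw cw
  split_ifs <;> rfl

theorem Hd_apply_self (K : Sentence A) : (Hd K : NSymA A) K = 1 := by simp [Hd]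

theorem Hd_apply_ne {K X : Sentence A} (h : X ≠ K) : (Hd K : NSymA A) X = 0 := by simp [Hd, h]

/-- Left multiplication as a linear map. -/
noncomputable def mulL (f : NSymA A) : NSymA A →ₗ[ℚ] NSymA A where
  toFun g := mulN f g
  map_add' g h := by
    funext I
    simp [mulN, mul_add, Finset.sum_add_distrib]
  map_smul' c g := by
    funext I
    simp only [mulN, Pi.smul_apply, smul_eq_mul, Finset.mul_sum, RingHom.id_apply]
    apply Finset.sum_congr rfl
    intros; ring

theorem mulN_Hd (I J : Sentence A) : mulN (Hd I) (Hd J) = (Hd (I ++ J) : NSymA A) := by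
  funext X
  unfold mulN
  by_cases hX : X = I ++ J
  · subst hX
    rw [Hd_apply_self, Finset.sum_eq_single I.length]
    · simp [Hd_apply_self]
    · intro j hj hne
      rw [Finset.mem_range] at hj
      rw [Hd_apply_ne (K := I), zero_mul]
      intro h
      have := congrArg List.length h
      simp at this hj
      omega
    · intro h
      simp at h
  · rw [Hd_apply_ne hX]
    apply Finset.sum_eq_zero
    intro j _
    by_cases h1 : X.take j = I
    · have h2 : X.drop j ≠ J := by
        rintro rfl
        apply hX
        rw [← h1, List.take_append_drop]
      rw [Hd_apply_ne h2, mul_zero]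
    · rw [Hd_apply_ne h1, zero_mul]

theorem restrictMono_valid (p : Sentence A) :
    (restrictMono p (List.range' 1 p.length)).1 = flattenWS p ∧
    ValidMono (restrictMono p (List.range' 1 p.length)) := by
  have h1 : (restrictMono p (List.range' 1 p.length)).1 = flattenWS p := by
    unfold restrictMono flattenWS
    have : ((p.zip (List.range' 1 p.length)).map Prod.fst) = p := by
      rw [List.map_fst_zip]; simp
    conv_rhs => rw [← this]
    rw [List.filter_map]
    rfl
  refine ⟨h1, ?_, ?_, ?_, ?_⟩
  · simp [restrictMono]
  · have hs : (restrictMono p (List.range' 1 p.length)).2.Sublist (List.range' 1 p.length) := by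
      unfold restrictMono
      have : ((p.zip (List.range' 1 p.length)).map Prod.snd) = List.range' 1 p.length := by
        rw [List.map_snd_zip]; simp
      conv_rhs => rw [← this]
      exact List.Sublist.map _ List.filter_sublist
    have : (List.range' 1 p.length).Pairwise (· < ·) := List.pairwise_lt_range'
    exact (this.sublist hs).isChain
  · intro j hj
    simp only [restrictMono, List.mem_map, List.mem_filter] at hj
    obtain ⟨⟨w, i⟩, ⟨hx, _⟩, rfl⟩ := hj
    have := (List.of_mem_zip hx).2
    rw [List.mem_range'_1] at this
    exact this.1
  · rw [h1]
    exact isSentence_flattenWS p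

theorem MQ_restrict (I p : Sentence A) (n : ℕ) (hn : n = p.length) :
    MQ I (restrictMono p (List.range' 1 n)) = (Hd (flattenWS p) : NSymA A) I := by
  subst hn
  have := restrictMono_valid p
  unfold MQ Hd
  rw [this.1]
  by_cases h : I = flattenWS p
  · simp [this.2, h]
  · simp [h, Ne.symm h]

theorem mulQ_MQ (I S K : Sentence A) :
    mulQ (MQ I) (MQ S) (K, List.range' 1 K.length) =
      SS K (fun p => (Hd (flattenWS p.1) : NSymA A) I * (Hd (flattenWS p.2) : NSymA A) S) := by
  unfold mulQ
  apply SS_congr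
  intro p hp
  have := splitsOf_length hp
  rw [MQ_restrict _ _ _ this.1.symm, MQ_restrict _ _ _ this.2.symm]

/-- Sum over all terms `K` of `F` and all splits of `K`. -/
noncomputable def TT {M : Type*} [AddCommMonoid M] [Module ℚ M] (F : NF A)
    (G : Sentence A × Sentence A → M) : M :=
  ∑ K ∈ F.support, F K • SS K G

theorem TT_map {M N : Type*} [AddCommMonoid M] [AddCommMonoid N] [Module ℚ M] [Module ℚ N]
    (F : NF A) (φ : M →ₗ[ℚ] N) (G : Sentence A × Sentence A → M) :
    φ (TT F G) = TT F (fun p => φ (G p)) := by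
  simp [TT, map_sum, SS_map]

theorem TT_sum {M ι : Type*} [AddCommMonoid M] [Module ℚ M] (F : NF A) (s : Finset ι)
    (G : ι → Sentence A × Sentence A → M) :
    TT F (fun p => ∑ i ∈ s, G i p) = ∑ i ∈ s, TT F (G i) := by
  unfold TT
  simp only [SS_sum, Finset.smul_sum]
  rw [Finset.sum_comm]

theorem TT_congr {M : Type*} [AddCommMonoid M] [Module ℚ M] (F : NF A)
    {G G' : Sentence A × Sentence A → M}
    (h : ∀ K ∈ F.support, ∀ p ∈ splitsOf K, G p = G' p) :
    TT F G = TT F G' := by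
  apply Finset.sum_congr rfl
  intro K hK
  rw [SS_congr K (h K hK)]

open Classical in
/-- All pairs arising by splitting. -/
noncomputable def allSplits (F : NF A) : Finset (Sentence A × Sentence A) :=
  F.support.biUnion (fun K => (splitsOf K).toFinset)

theorem TT_eq_zero {M : Type*} [AddCommMonoid M] [Module ℚ M] (F : NF A)
    {G : Sentence A × Sentence A → M}
    (h : ∀ p ∈ allSplits F, G p = 0) : TT F G = 0 := by
  classical
  rw [TT_congr F (G' := fun _ => 0)]
  · simp [TT, SS]
  · intro K hK p hp
    apply h
    unfold allSplits
    rw [Finset.mem_biUnion]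
    exact ⟨K, hK, by simpa using hp⟩

theorem pairNQ_eq (F : NF A) (hF : ∀ K ∈ F.support, IsSentence K) (I S : Sentence A) :
    pairNQ (⇑F) (mulQ (MQ I) (MQ S)) =
      TT F (fun p => (Hd (flattenWS p.1) : NSymA A) I * (Hd (flattenWS p.2) : NSymA A) S) := by
  unfold pairNQ TT
  simp only [mulQ_MQ, smul_eq_mul]
  apply finsum_mem_eq_sum_of_inter_support_eq
  ext K
  simp only [Set.mem_inter_iff, Set.mem_ofPred_eq, Function.mem_support, Finset.mem_coe,
    Finsupp.mem_support_iff]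
  constructor
  · rintro ⟨_, h⟩
    exact ⟨left_ne_zero_of_mul h, h⟩
  · rintro ⟨h1, h⟩
    exact ⟨hF K (by simpa using h1), h⟩

theorem rperp_eq (F : NF A) (hF : ∀ K ∈ F.support, IsSentence K) (S : Sentence A) :
    rperp (MQ S) (⇑F) =
      TT F (fun p => (Hd (flattenWS p.2) : NSymA A) S • (Hd (flattenWS p.1) : NSymA A)) := by
  classical
  unfold rperp
  simp only [pairNQ_eq F hF]
  rw [finsum_mem_eq_sum_of_inter_support_eq (t := (allSplits F).image (fun p => flattenWS p.1))
    (f := fun I => TT F (fun p => (Hd (flattenWS p.1) : NSymA A) I * (Hd (flattenWS p.2) : NSymA A) S)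
      • (Hd I : NSymA A))]
  · have : ∀ I : Sentence A,
        TT F (fun p => (Hd (flattenWS p.1) : NSymA A) I * (Hd (flattenWS p.2) : NSymA A) S)
      • (Hd I : NSymA A) =
        TT F (fun p => ((Hd (flattenWS p.1) : NSymA A) I * (Hd (flattenWS p.2) : NSymA A) S) •
          (Hd I : NSymA A)) := fun I =>
        TT_map F (LinearMap.toSpanSingleton ℚ (NSymA A) (Hd I)) _
    simp only [this]
    rw [← TT_sum]
    apply TT_congr
    intro K hK p hp
    rw [Finset.sum_eq_single (flattenWS p.1)]
    · rw [Hd_apply_self, one_mul]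
    · intro I _ hne
      rw [Hd_apply_ne hne, zero_mul, zero_smul]
    · intro h
      exfalso
      apply h
      rw [Finset.mem_image]
      refine ⟨p, ?_, rfl⟩
      unfold allSplits
      rw [Finset.mem_biUnion]
      exact ⟨K, hK, by simpa using hp⟩
  · ext I
    simp only [Set.mem_inter_iff, Set.mem_ofPred_eq, Finset.mem_coe]
    refine and_congr_left fun h => ?_
    have hI : I ∈ (allSplits F).image (fun p => flattenWS p.1) := by
      by_contra hI
      apply h
      beta_reduce
      rw [TT_eq_zero, zero_smul]
      intro p hp
      rw [Hd_apply_ne, zero_mul]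
      rintro rfl
      exact hI (Finset.mem_image_of_mem _ hp)
    refine ⟨fun _ => hI, fun _ => ?_⟩
    rw [Finset.mem_image] at hI
    obtain ⟨p, _, rfl⟩ := hI
    exact isSentence_flattenWS _

theorem refines_flatten {Q S : Sentence A} (h : Refines Q S) : Q.flatten = S.flatten := by
  obtain ⟨P, _, h2, h3⟩ := h
  rw [← h2, ← h3, List.flatten_flatten]

theorem refines_isSentence {Q S : Sentence A} (h : Refines Q S) (hQ : IsSentence Q) :
    IsSentence S := by
  obtain ⟨P, h1, h2, h3⟩ := h
  intro w hw
  rw [← h3, List.mem_map] at hw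
  obtain ⟨p, hp, rfl⟩ := hw
  intro h4
  have hps : IsSentence p := by
    intro w hw
    exact hQ w (by rw [← h2]; exact List.mem_flatten.2 ⟨p, hp, hw⟩)
  exact h1 p hp (sentence_flatten_nil hps h4)

theorem refines_finite {Q : Sentence A} (hQ : IsSentence Q) : {S | Refines Q S}.Finite := by
  apply (Finset.finite_toSet (comps Q.flatten)).subset
  intro S hS
  rw [Finset.mem_coe, mem_comps]
  exact ⟨refines_isSentence hS hQ, (refines_flatten hS).symm⟩

open Classical in
theorem inner_eq (F : NF A) (hF : ∀ K ∈ F.support, IsSentence K) (Q : Sentence A)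
    (hQ : IsSentence Q) :
    (∑ᶠ S ∈ {S : Sentence A | Refines Q S}, rperp (MQ S) (⇑F)) =
      TT F (fun p => if Q ∈ refs p.2 then (Hd (flattenWS p.1) : NSymA A) else 0) := by
  rw [finsum_mem_eq_finite_toFinset_sum _ (refines_finite hQ)]
  simp only [rperp_eq F hF]
  rw [← TT_sum]
  apply TT_congr
  intro K hK p hp
  split_ifs with h
  · rw [mem_refs_flattenWS] at h
    rw [Finset.sum_eq_single (flattenWS p.2)]
    · rw [Hd_apply_self, one_smul]
    · intro S _ hne
      rw [Hd_apply_ne hne, zero_smul]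
    · intro h1
      simp [h.2] at h1
  · apply Finset.sum_eq_zero
    intro S hS
    rw [Hd_apply_ne, zero_smul]
    rintro rfl
    apply h
    rw [mem_refs_flattenWS]
    exact ⟨hQ, by simpa using hS⟩

/-- Coercion of finitely supported functions as a linear map. -/
noncomputable def coeL : NF A →ₗ[ℚ] NSymA A := Finsupp.lcoeFun

theorem coeL_apply (F : NF A) : coeL F = ⇑F := rfl

theorem Bern_eq (v : List A) (F : NF A) (hF : ∀ K ∈ F.support, IsSentence K) :
    Bern v (⇑F) = ⇑(Bf v F) := by
  classical
  unfold Bern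
  have hterm : ∀ Q ∈ {Q : Sentence A | IsSentence Q},
      ((-1 : ℚ)) ^ Q.length • mulN (Hw (v ++ Q.reverse.flatten))
        (∑ᶠ S ∈ {S : Sentence A | Refines Q S}, rperp (MQ S) (⇑F)) =
      TT F (fun p => if Q ∈ refs p.2 then
        ((-1 : ℚ)) ^ Q.length • (Hd (cw (v ++ Q.reverse.flatten) ++ flattenWS p.1) : NSymA A)
          else 0) := by
    intro Q hQ
    rw [inner_eq F hF Q hQ, Hw_eq]
    have h := TT_map F (((-1 : ℚ)) ^ Q.length • mulL (Hd (cw (v ++ Q.reverse.flatten))))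
      (fun p => if Q ∈ refs p.2 then (Hd (flattenWS p.1) : NSymA A) else 0)
    rw [LinearMap.smul_apply] at h
    refine h.trans ?_
    apply TT_congr
    intro K _ p _
    split_ifs
    · rw [LinearMap.smul_apply, ← mulN_Hd]; rfl
    · simp
  rw [finsum_mem_congr rfl hterm]
  rw [finsum_mem_eq_sum_of_inter_support_eq (t := (allSplits F).biUnion (fun p => refs p.2))]
  · rw [← TT_sum, ← coeL_apply]
    have : Bf v F = TT F (fun p => ∑ Q ∈ refs p.2, ((-1 : ℚ) ^ Q.length) •
        Finsupp.single (cw (v ++ Q.reverse.flatten) ++ flattenWS p.1) (1 : ℚ)) := rfl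
    rw [this, TT_map]
    apply TT_congr
    intro K hK p hp
    rw [← Finset.sum_filter, map_sum]
    have hsub : refs p.2 ⊆ (allSplits F).biUnion (fun p => refs p.2) := by
      apply Finset.subset_biUnion_of_mem (fun p : Sentence A × Sentence A => refs p.2)
      unfold allSplits
      rw [Finset.mem_biUnion]
      exact ⟨K, hK, by simpa using hp⟩
    rw [Finset.filter_mem_eq_inter, Finset.inter_eq_right.2 hsub]
    apply Finset.sum_congr rfl
    intro Q _
    rw [map_smul, coeL_apply, Hd_eq_single]
  · ext Q
    simp only [Set.mem_inter_iff, Set.mem_ofPred_eq, Finset.mem_coe]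
    refine and_congr_left fun h => ?_
    have hI : Q ∈ (allSplits F).biUnion (fun p => refs p.2) := by
      by_contra hI
      apply h
      apply TT_eq_zero
      intro p hp
      rw [if_neg]
      intro hq
      exact hI (Finset.mem_biUnion.2 ⟨p, hp, hq⟩)
    refine ⟨fun _ => hI, fun _ => ?_⟩
    rw [Finset.mem_biUnion] at hI
    obtain ⟨p, _, hp⟩ := hI
    exact (mem_refs.1 hp).1

/-- The submodule of elements supported on genuine sentences. -/
noncomputable def sentSub (A : Type*) : Submodule ℚ (NF A) :=
  Finsupp.supported ℚ ℚ {I : Sentence A | IsSentence I}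

theorem mem_sentSub {F : NF A} : F ∈ sentSub A ↔ ∀ K ∈ F.support, IsSentence K := by
  unfold sentSub
  rw [Finsupp.mem_supported]
  rfl

theorem Bf_mem (v : List A) (F : NF A) : Bf v F ∈ sentSub A := by
  unfold Bf
  rw [Finsupp.linearCombination_apply]
  apply Submodule.finsuppSum_mem
  intro K _
  apply Submodule.smul_mem
  unfold bH SS
  apply list_sum_mem
  intro x hx
  rw [List.mem_map] at hx
  obtain ⟨p, _, rfl⟩ := hx
  apply Submodule.sum_mem
  intro Q _
  apply Submodule.smul_mem
  apply Finsupp.single_mem_supported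
  show IsSentence _
  rw [isSentence_append]
  exact ⟨isSentence_cw _, isSentence_flattenWS _⟩

theorem immF_mem (J : Sentence A) : immF J ∈ sentSub A := by
  cases J with
  | nil => exact Finsupp.single_mem_supported ℚ _ isSentence_nil
  | cons v J => exact Bf_mem v _

theorem ImmS_eq (J : Sentence A) : ImmS J = ⇑(immF J) := by
  induction J with
  | nil => exact Hd_eq_single _
  | cons v J ih =>
    have : ImmS (v :: J) = Bern v (ImmS J) := rfl
    rw [this, ih, Bern_eq _ _ (mem_sentSub.1 (immF_mem J))]
    rfl

end PartThree

section PartFour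
variable {A : Type*}

/-- Glue the word `w` to the last word of `D`. -/
def gl (D : Sentence A) (w : List A) : Sentence A := D.dropLast ++ [D.getLastD [] ++ w]

theorem gl_snoc (X : Sentence A) (y w : List A) : gl (X ++ [y]) w = X ++ [y ++ w] := by
  simp [gl]

open Classical in
/-- Coarsenings of a sentence. -/
noncomputable def cors (C : Sentence A) : Finset (Sentence A) :=
  (comps C.flatten).filter (fun S => Refines C S)

theorem mem_cors {C S : Sentence A} (hC : IsSentence C) : S ∈ cors C ↔ Refines C S := by
  classical
  unfold cors
  rw [Finset.mem_filter, mem_comps]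
  constructor
  · exact fun h => h.2
  · exact fun h => ⟨⟨refines_isSentence h hC, (refines_flatten h).symm⟩, h⟩

/-- Finitely supported ribbon function. -/
noncomputable def ribF (C : Sentence A) : NF A :=
  ∑ S ∈ cors C, ((-1 : ℚ)) ^ (C.length - S.length) • Finsupp.single S 1

theorem Rib_eq (C : Sentence A) (hC : IsSentence C) : Rib C = ⇑(ribF C) := by
  unfold Rib ribF
  rw [← coeL_apply, map_sum]
  have : {S | Refines C S} = ((cors C : Finset (Sentence A)) : Set (Sentence A)) := by
    ext S
    rw [Finset.mem_coe, mem_cors hC]; rfl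
  rw [this, finsum_mem_coe_finset]
  apply Finset.sum_congr rfl
  intro S _
  rw [map_smul, coeL_apply, Hd_eq_single]

theorem refines_length {C S : Sentence A} (h : Refines C S) : S.length ≤ C.length := by
  obtain ⟨P, h1, h2, h3⟩ := h
  rw [← h2, ← h3]
  simp only [List.length_map, List.length_flatten]
  have : P.map (fun _ => 1) = P.map (fun _ => 1) := rfl
  have h4 : (P.map (fun _ => 1)).sum ≤ (P.map List.length).sum := by
    apply List.sum_le_sum
    intro p hp
    exact List.length_pos_iff.2 (h1 p hp)
  simpa using h4

theorem refines_ne_nil {C S : Sentence A} (h : Refines C S) (hC : C ≠ []) : S ≠ [] := by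
  obtain ⟨P, h1, h2, h3⟩ := h
  rintro rfl
  simp at h3
  subst h3
  simp at h2
  exact hC h2

theorem refines_snoc {C D : Sentence A} (w : List A) (h : Refines C D) :
    Refines (C ++ [w]) (D ++ [w]) := by
  obtain ⟨P, h1, h2, h3⟩ := h
  refine ⟨P ++ [[w]], ?_, by simp [h2], by simp [h3]⟩
  intro p hp
  rw [List.mem_append] at hp
  rcases hp with hp | hp
  · exact h1 p hp
  · simp at hp; simp [hp]

theorem refines_snoc_gl {C D : Sentence A} (w : List A) (hC : C ≠ []) (h : Refines C D) :
    Refines (C ++ [w]) (gl D w) := by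
  obtain ⟨P, h1, h2, h3⟩ := h
  rcases List.eq_nil_or_concat' P with rfl | ⟨P', q, rfl⟩
  · simp at h2; exact absurd h2 hC 
  · rw [List.map_append, List.map_singleton] at h3
    subst h3
    rw [gl_snoc]
    refine ⟨P' ++ [q ++ [w]], ?_, by simp [← h2], by simp⟩
    intro p hp
    rw [List.mem_append] at hp
    rcases hp with hp | hp
    · exact h1 p (by simp [hp])
    · simp at hp; simp [hp]

theorem refines_gl_gl {C D : Sentence A} (u w : List A) (h : Refines (C ++ [u]) D) :
    Refines (C ++ [u ++ w]) (gl D w) := by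
  obtain ⟨P, h1, h2, h3⟩ := h
  rcases List.eq_nil_or_concat' P with rfl | ⟨P', q, rfl⟩
  · simp at h2
  · have hq : q ≠ [] := h1 q (by simp)
    rcases List.eq_nil_or_concat' q with rfl | ⟨q', x, rfl⟩
    · exact absurd rfl hq
    rw [List.map_append, List.map_singleton] at h3
    subst h3
    rw [gl_snoc]
    have h4 : P'.flatten ++ q' ++ [x] = C ++ [u] := by simpa using h2
    obtain ⟨h5, h6⟩ := List.append_inj' h4 rfl
    have h7 : x = u := by simpa using h6
    refine ⟨P' ++ [q' ++ [u ++ w]], ?_, by simp [← h5], by simp [h7]⟩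
    intro p hp
    rw [List.mem_append] at hp
    rcases hp with hp | hp
    · exact h1 p (by simp [hp])
    · simp at hp; simp [hp]

theorem refines_snoc_cases {C S : Sentence A} (w : List A) (h : Refines (C ++ [w]) S) :
    (∃ D, Refines C D ∧ S = D ++ [w]) ∨ (∃ D, Refines C D ∧ S = gl D w) := by
  obtain ⟨P, h1, h2, h3⟩ := h
  rcases List.eq_nil_or_concat' P with rfl | ⟨P', q, rfl⟩
  · simp at h2
  · have hq : q ≠ [] := h1 q (by simp)
    rcases List.eq_nil_or_concat' q with rfl | ⟨q', x, rfl⟩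
    · exact absurd rfl hq
    rw [List.map_append, List.map_singleton] at h3
    subst h3
    have h4 : P'.flatten ++ q' ++ [x] = C ++ [w] := by simpa using h2
    obtain ⟨h5, h6⟩ := List.append_inj' h4 rfl
    have h7 : x = w := by simpa using h6
    subst h7
    by_cases hq' : q' = []
    · left
      subst hq'
      refine ⟨P'.map List.flatten, ⟨P', fun p hp => h1 p (by simp [hp]), by simpa using h5, rfl⟩,
        by simp⟩
    · right
      refine ⟨P'.map List.flatten ++ [q'.flatten], ⟨P' ++ [q'], ?_, by simp [← h5], by simp⟩, ?_⟩
      · intro p hp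
        rw [List.mem_append] at hp
        rcases hp with hp | hp
        · exact h1 p (by simp [hp])
        · simp at hp; simp [hp, hq']
      · rw [gl_snoc]; simp

theorem refines_gl_cases {C S : Sentence A} (u w : List A) (h : Refines (C ++ [u ++ w]) S) :
    ∃ D, Refines (C ++ [u]) D ∧ S = gl D w := by
  obtain ⟨P, h1, h2, h3⟩ := h
  rcases List.eq_nil_or_concat' P with rfl | ⟨P', q, rfl⟩
  · simp at h2
  · have hq : q ≠ [] := h1 q (by simp)
    rcases List.eq_nil_or_concat' q with rfl | ⟨q', x, rfl⟩
    · exact absurd rfl hq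
    rw [List.map_append, List.map_singleton] at h3
    subst h3
    have h4 : P'.flatten ++ q' ++ [x] = C ++ [u ++ w] := by simpa using h2
    obtain ⟨h5, h6⟩ := List.append_inj' h4 rfl
    have h7 : x = u ++ w := by simpa using h6
    subst h7
    refine ⟨P'.map List.flatten ++ [(q' ++ [u]).flatten],
      ⟨P' ++ [q' ++ [u]], ?_, by simp [← h5], by simp⟩, ?_⟩
    · intro p hp
      rw [List.mem_append] at hp
      rcases hp with hp | hp
      · exact h1 p (by simp [hp])
      · simp at hp; simp [hp]
    · rw [gl_snoc]; simp

theorem gl_inj {D D' : Sentence A} {w : List A} (hD : D ≠ []) (hD' : D' ≠ [])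
    (h : gl D w = gl D' w) : D = D' := by
  rcases List.eq_nil_or_concat' D with rfl | ⟨X, y, rfl⟩
  · exact absurd rfl hD
  rcases List.eq_nil_or_concat' D' with rfl | ⟨X', y', rfl⟩
  · exact absurd rfl hD'
  rw [gl_snoc, gl_snoc] at h
  obtain ⟨h1, h2⟩ := List.append_inj' h rfl
  simp at h2
  rw [h1, h2]

theorem gl_length {D : Sentence A} {w : List A} (hD : D ≠ []) : (gl D w).length = D.length := by
  rcases List.eq_nil_or_concat' D with rfl | ⟨X, y, rfl⟩
  · exact absurd rfl hD
  rw [gl_snoc]; simp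

theorem rib_mul (C : Sentence A) (u w : List A) (hC : IsSentence (C ++ [u])) (hw : w ≠ []) :
    opR w (ribF (C ++ [u])) = ribF (C ++ [u] ++ [w]) + ribF (C ++ [u ++ w]) := by
  classical
  have hne : C ++ [u] ≠ [] := by simp
  have hu : u ≠ [] := hC u (by simp)
  have hC1 : IsSentence (C ++ [u] ++ [w]) := by
    rw [isSentence_append, isSentence_cons]; exact ⟨hC, hw, isSentence_nil⟩
  have hC2 : IsSentence (C ++ [u ++ w]) := by
    rw [isSentence_append] at hC
    rw [isSentence_append, isSentence_cons]; exact ⟨hC.1, by simp [hu], isSentence_nil⟩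
  have hcw : cw w = [w] := by
    cases w with
    | nil => exact absurd rfl hw
    | cons => rfl
  have e1 : cors (C ++ [u] ++ [w]) = (cors (C ++ [u])).image (fun D => D ++ [w]) ∪
      (cors (C ++ [u])).image (fun D => gl D w) := by
    ext S
    rw [mem_cors hC1, Finset.mem_union, Finset.mem_image, Finset.mem_image]
    constructor
    · intro h
      rcases refines_snoc_cases w h with ⟨D, h1, rfl⟩ | ⟨D, h1, rfl⟩
      · exact Or.inl ⟨D, (mem_cors hC).2 h1, rfl⟩
      · exact Or.inr ⟨D, (mem_cors hC).2 h1, rfl⟩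
    · rintro (⟨D, h1, rfl⟩ | ⟨D, h1, rfl⟩)
      · exact refines_snoc w ((mem_cors hC).1 h1)
      · exact refines_snoc_gl w hne ((mem_cors hC).1 h1)
  have e2 : cors (C ++ [u ++ w]) = (cors (C ++ [u])).image (fun D => gl D w) := by
    ext S
    rw [mem_cors hC2, Finset.mem_image]
    constructor
    · intro h
      obtain ⟨D, h1, rfl⟩ := refines_gl_cases u w h
      exact ⟨D, (mem_cors hC).2 h1, rfl⟩
    · rintro ⟨D, h1, rfl⟩
      exact refines_gl_gl u w ((mem_cors hC).1 h1)
  have hdis : Disjoint ((cors (C ++ [u])).image (fun D => D ++ [w]))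
      ((cors (C ++ [u])).image (fun D => gl D w)) := by
    rw [Finset.disjoint_left]
    intro S h1 h2
    rw [Finset.mem_image] at h1 h2
    obtain ⟨D, h1, rfl⟩ := h1
    obtain ⟨D', h2, h3⟩ := h2
    rw [mem_cors hC] at h1 h2
    have h4 := refines_ne_nil h2 hne
    have h5 := refines_isSentence h2 hC
    rcases List.eq_nil_or_concat' D' with rfl | ⟨X, y, rfl⟩
    · exact absurd rfl h4
    rw [gl_snoc] at h3
    obtain ⟨_, h6⟩ := List.append_inj' h3 rfl
    simp at h6
    exact h5 y (by simp) h6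
  have hinj1 : Set.InjOn (fun D : Sentence A => D ++ [w]) (cors (C ++ [u])) := by
    intro D _ D' _ h
    simpa using h
  have hinj2 : Set.InjOn (fun D : Sentence A => gl D w) (cors (C ++ [u])) := by
    intro D h1 D' h2 h
    rw [Finset.mem_coe, mem_cors hC] at h1 h2
    exact gl_inj (refines_ne_nil h1 hne) (refines_ne_nil h2 hne) h
  unfold ribF
  rw [e1, e2, Finset.sum_union hdis, Finset.sum_image hinj1, Finset.sum_image hinj2,
    Finset.sum_image hinj2, map_sum, add_assoc, ← Finset.sum_add_distrib, ← Finset.sum_add_distrib]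
  apply Finset.sum_congr rfl
  intro D hD
  rw [mem_cors hC] at hD
  have h1 := refines_length hD
  rw [gl_length (refines_ne_nil hD hne), map_smul, opR_single, hcw]
  simp only [List.length_append, List.length_cons, List.length_nil, zero_add] at h1 ⊢
  rw [show C.length + 1 + 1 - (D.length + 1) = C.length + 1 - D.length by omega,
    show C.length + 1 + 1 - D.length = (C.length + 1 - D.length) + 1 by omega, pow_succ]
  simp

theorem ribF_nil : ribF ([] : Sentence A) = Finsupp.single [] 1 := by
  have : cors ([] : Sentence A) = {[]} := by
    ext S
    rw [mem_cors isSentence_nil, Finset.mem_singleton]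
    constructor
    · intro h
      simpa using refines_length h
    · rintro rfl; exact ⟨[], by simp, rfl, rfl⟩
  rw [ribF, this]; simp

theorem ribF_single (w : List A) (hw : w ≠ []) : ribF [w] = Finsupp.single [w] 1 := by
  have hs : IsSentence [w] := by rw [isSentence_cons]; exact ⟨hw, isSentence_nil⟩
  have : cors [w] = {[w]} := by
    ext S
    rw [mem_cors hs, Finset.mem_singleton]
    constructor
    · intro h
      have h1 := refines_length h
      have h2 := refines_ne_nil h (by simp)
      have h3 := refines_flatten h
      match S with
      | [] => exact absurd rfl h2
      | [x] => simpa using h3.symm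
      | _ :: _ :: _ => simp at h1
    · rintro rfl; exact ⟨[[w]], by simp, rfl, by simp⟩
  rw [ribF, this]; simp

end PartFour

section PartFive
variable {A : Type*}

/-- Add a letter on the front of the first word. -/
def consHead (a : A) : Sentence A → Sentence A
  | [] => [[a]]
  | w :: C => (a :: w) :: C

/-- Cut a sequence of lettered rows at the strict ascents of the row index. -/
def cut : List (A × ℕ) → Sentence A
  | [] => []
  | [x] => [[x.1]]
  | x :: y :: l => if y.2 ≤ x.2 then consHead x.1 (cut (y :: l)) else [x.1] :: cut (y :: l)

theorem cut_cons_cons (x y : A × ℕ) (l : List (A × ℕ)) : cut (x :: y :: l) =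
    if y.2 ≤ x.2 then consHead x.1 (cut (y :: l)) else [x.1] :: cut (y :: l) := rfl

theorem consHead_ne (a : A) (C : Sentence A) : consHead a C ≠ [] := by
  cases C <;> simp [consHead]

theorem cut_ne (x : A × ℕ) (l : List (A × ℕ)) : cut (x :: l) ≠ [] := by
  cases l with
  | nil => simp [cut]
  | cons y l =>
    rw [cut_cons_cons]
    split_ifs
    · exact consHead_ne _ _
    · simp

theorem consHead_append (a : A) (C D : Sentence A) (h : C ≠ []) :
    consHead a (C ++ D) = consHead a C ++ D := by
  cases C with
  | nil => exact absurd rfl h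
  | cons w C => rfl

theorem consHead_gl (a : A) (C : Sentence A) (w : List A) (h : C ≠ []) :
    consHead a (gl C w) = gl (consHead a C) w := by
  rcases List.eq_nil_or_concat' C with rfl | ⟨X, y, rfl⟩
  · exact absurd rfl h
  rw [gl_snoc]
  cases X with
  | nil => simp [consHead, gl]
  | cons v X =>
    have : consHead a (v :: X ++ [y]) = ((a :: v) :: X) ++ [y] := rfl
    rw [this, gl_snoc]; rfl

theorem cons_gl (v : List A) (C : Sentence A) (w : List A) (h : C ≠ []) :
    v :: (gl C w) = gl (v :: C) w := by
  rcases List.eq_nil_or_concat' C with rfl | ⟨X, y, rfl⟩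
  · exact absurd rfl h
  rw [gl_snoc, ← List.cons_append, ← List.cons_append, gl_snoc]

/-- `x` is a strict ascent after `l` (or `l` is empty). -/
def asc (l : List (A × ℕ)) (x : A × ℕ) : Prop := ∀ y ∈ l.getLast?, y.2 < x.2

theorem asc_cons_cons (y z : A × ℕ) (l : List (A × ℕ)) (x : A × ℕ) :
    asc (y :: z :: l) x ↔ asc (z :: l) x := by
  simp [asc, List.getLast?_cons_cons]

theorem cut_snoc_asc (l : List (A × ℕ)) (x : A × ℕ) (h : asc l x) :
    cut (l ++ [x]) = cut l ++ [[x.1]] := by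
  induction l with
  | nil => rfl
  | cons y l ih =>
    cases l with
    | nil =>
      have : y.2 < x.2 := h y (by simp)
      simp [cut, this]
    | cons z l =>
      rw [asc_cons_cons] at h
      have ih := ih h
      rw [List.cons_append] at ih
      rw [List.cons_append, List.cons_append, cut_cons_cons, cut_cons_cons, ih]
      split_ifs
      · rw [consHead_append _ _ _ (cut_ne _ _)]
      · rfl

theorem cut_snoc_not (l : List (A × ℕ)) (x : A × ℕ) (h : ¬ asc l x) :
    cut (l ++ [x]) = gl (cut l) [x.1] := by
  induction l with
  | nil => exact absurd (by simp [asc]) h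
  | cons y l ih =>
    cases l with
    | nil =>
      have : x.2 ≤ y.2 := by simpa [asc] using h
      simp [cut, this, consHead, gl]
    | cons z l =>
      rw [asc_cons_cons] at h
      have ih := ih h
      rw [List.cons_append] at ih
      rw [List.cons_append, List.cons_append, cut_cons_cons, cut_cons_cons, ih]
      split_ifs
      · rw [consHead_gl _ _ _ (cut_ne _ _)]
      · rw [cons_gl _ _ _ (cut_ne _ _)]

theorem cut_ne' {l : List (A × ℕ)} (h : l ≠ []) : cut l ≠ [] := by
  cases l with
  | nil => exact absurd rfl h
  | cons x l => exact cut_ne x l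

theorem not_asc_ne {l : List (A × ℕ)} {x : A × ℕ} (h : ¬ asc l x) : l ≠ [] := by
  rintro rfl
  exact h (by simp [asc])

/-- Weakly decreasing row indices. -/
abbrev Dec (t : List (A × ℕ)) : Prop := t.Pairwise (fun x y => y.2 ≤ x.2)

theorem not_asc_of_dec (l t : List (A × ℕ)) (x y : A × ℕ) (h : Dec (x :: t ++ [y])) :
    ¬ asc (l ++ x :: t) y := by
  intro h1
  have hne : (l ++ x :: t) ≠ [] := by simp
  have h2 := h1 ((x :: t).getLast (by simp)) (by
    rw [List.getLast?_append_of_ne_nil _ (by simp), List.getLast?_eq_getLast_of_ne_nil (by simp)]; rfl)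
  have h3 := (List.pairwise_append.1 h).2.2 _ (List.getLast_mem (l := x :: t) (by simp)) y (by simp)
  omega

theorem gl_gl (D : Sentence A) (u w : List A) (h : D ≠ []) : gl (gl D u) w = gl D (u ++ w) := by
  rcases List.eq_nil_or_concat' D with rfl | ⟨X, y, rfl⟩
  · exact absurd rfl h
  rw [gl_snoc, gl_snoc, gl_snoc, List.append_assoc]

theorem cut_append_asc (l t : List (A × ℕ)) (x : A × ℕ) (h : asc l x) (ht : Dec (x :: t)) :
    cut (l ++ x :: t) = cut l ++ [(x :: t).map Prod.fst] := by
  induction t using List.reverseRecOn with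
  | nil => exact cut_snoc_asc l x h
  | append_singleton t y ih =>
    have h1 : Dec (x :: t) := (List.pairwise_append.1 (by rw [← List.cons_append] at ht; exact ht)).1
    have : l ++ x :: (t ++ [y]) = (l ++ x :: t) ++ [y] := by simp
    rw [this, cut_snoc_not _ _ (not_asc_of_dec l t x y ht), ih h1, gl_snoc]
    simp

theorem cut_append_not (l t : List (A × ℕ)) (x : A × ℕ) (h : ¬ asc l x) (ht : Dec (x :: t)) :
    cut (l ++ x :: t) = gl (cut l) ((x :: t).map Prod.fst) := by
  induction t using List.reverseRecOn with
  | nil => exact cut_snoc_not l x h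
  | append_singleton t y ih =>
    have h1 : Dec (x :: t) := (List.pairwise_append.1 (by rw [← List.cons_append] at ht; exact ht)).1
    have : l ++ x :: (t ++ [y]) = (l ++ x :: t) ++ [y] := by simp
    rw [this, cut_snoc_not _ _ (not_asc_of_dec l t x y ht), ih h1,
      gl_gl _ _ _ (cut_ne' (not_asc_ne h))]
    simp

theorem cut_decomp (l : List (A × ℕ)) (C : Sentence A) (w : List A) (h : cut l = C ++ [w]) :
    ∃ l' x t, l = l' ++ x :: t ∧ cut l' = C ∧ (x :: t).map Prod.fst = w ∧ Dec (x :: t) ∧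
      asc l' x := by
  induction l using List.reverseRecOn generalizing C w with
  | nil => simp [cut] at h
  | append_singleton l y ih =>
    by_cases ha : asc l y
    · rw [cut_snoc_asc l y ha] at h
      obtain ⟨h1, h2⟩ := List.append_inj' h rfl
      exact ⟨l, y, [], rfl, h1, by simpa using h2, by simp, ha⟩
    · rw [cut_snoc_not l y ha] at h
      rcases List.eq_nil_or_concat' (cut l) with h0 | ⟨X, u, h0⟩
      · exact absurd h0 (cut_ne' (not_asc_ne ha))
      rw [h0, gl_snoc] at h
      obtain ⟨h1, h2⟩ := List.append_inj' h rfl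
      obtain ⟨l', x, t, rfl, h3, h4, h5, h6⟩ := ih X u h0
      refine ⟨l', x, t ++ [y], by simp, h3.trans h1, ?_, ?_, h6⟩
      · rw [← List.cons_append, List.map_append, h4]; simpa using h2
      · rw [← List.cons_append]
        unfold Dec
        rw [List.pairwise_append]
        refine ⟨h5, by simp, ?_⟩
        intro a ha' b hb
        simp only [List.mem_singleton] at hb
        subst hb
        have h7 : b.2 ≤ ((x :: t).getLast (by simp)).2 := by
          by_contra hc
          apply ha
          intro z hz
          rw [List.getLast?_append_of_ne_nil _ (by simp),
            List.getLast?_eq_getLast_of_ne_nil (by simp)] at hz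
          simp only [Option.mem_def, Option.some.injEq] at hz
          rw [← hz]; omega
        rcases List.eq_nil_or_concat' (x :: t) with h8 | ⟨s, z, h8⟩
        · simp at h8
        · simp only [h8] at ha' h5 h7
          rw [List.getLast_append_singleton] at h7
          unfold Dec at h5
          rw [List.pairwise_append] at h5
          rw [List.mem_append] at ha'
          rcases ha' with ha' | ha'
          · exact h7.trans (h5.2.2 a ha' z (by simp))
          · simp at ha'; rw [ha']; exact h7

theorem cut_flatten (l : List (A × ℕ)) : (cut l).flatten = l.map Prod.fst := by
  induction l with
  | nil => rfl
  | cons x l ih =>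
    cases l with
    | nil => rfl
    | cons y l =>
      rw [cut_cons_cons]
      split_ifs
      · cases hc : cut (y :: l) with
        | nil => exact absurd hc (cut_ne _ _)
        | cons w C => rw [hc] at ih; simp [consHead] at ih ⊢; exact ih
      · simp at ih ⊢; exact ih

theorem cut_isSentence (l : List (A × ℕ)) : IsSentence (cut l) := by
  induction l with
  | nil => exact isSentence_nil
  | cons x l ih =>
    cases l with
    | nil => simp [cut, IsSentence]
    | cons y l =>
      rw [cut_cons_cons]
      split_ifs
      · cases hc : cut (y :: l) with
        | nil => exact absurd hc (cut_ne _ _)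
        | cons w C =>
          rw [hc, isSentence_cons] at ih
          rw [consHead, isSentence_cons]; exact ⟨by simp, ih.2⟩
      · rw [isSentence_cons]; exact ⟨by simp, ih⟩

/-- Validity of a sequence of additions starting from `J`. -/
def VL : Sentence A → List (A × ℕ) → Prop
  | _, [] => True
  | J, x :: l => x.2 ≤ J.length ∧ VL (addL J x) l

theorem VL_append (J : Sentence A) (l t : List (A × ℕ)) :
    VL J (l ++ t) ↔ VL J l ∧ VL (l.foldl addL J) t := by
  induction l generalizing J with
  | nil => simp [VL]
  | cons x l ih => simp [VL, ih, and_assoc]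

theorem VL_singleton (J : Sentence A) (x : A × ℕ) : VL J [x] ↔ x.2 ≤ J.length := by simp [VL]

/-- The sentence built by a sequence. -/
def build (l : List (A × ℕ)) : Sentence A := l.foldl addL []

theorem build_append (l t : List (A × ℕ)) : build (l ++ t) = t.foldl addL (build l) := by
  simp [build]

theorem build_snoc (l : List (A × ℕ)) (x : A × ℕ) : build (l ++ [x]) = addL (build l) x := by
  simp [build]

theorem addL_length (J : Sentence A) (x : A × ℕ) :
    (addL J x).length = if x.2 < J.length then J.length else J.length + 1 := by
  unfold addL; split_ifs <;> simp

theorem VL_of_le (J : Sentence A) (t : List (A × ℕ)) (h : ∀ x ∈ t, x.2 ≤ J.length) : VL J t := by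
  induction t generalizing J with
  | nil => trivial
  | cons x t ih =>
    refine ⟨h x (by simp), ih _ ?_⟩
    intro y hy
    have := h y (by simp [hy])
    rw [addL_length]; split_ifs <;> omega

theorem le_of_VL_dec (J : Sentence A) (t : List (A × ℕ)) (h : VL J t) (hd : Dec t) :
    ∀ x ∈ t, x.2 ≤ J.length := by
  cases t with
  | nil => simp
  | cons x t =>
    intro y hy
    rcases List.mem_cons.1 hy with rfl | hy
    · exact h.1
    · exact ((List.pairwise_cons.1 hd).1 y hy).trans h.1

theorem mem_tset_iff (J : Sentence A) (w : List A) (t : List (A × ℕ)) :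
    t ∈ tset J.length w ↔ t.map Prod.fst = w ∧ Dec t ∧ VL J t := by
  rw [mem_tset]
  constructor
  · rintro ⟨h1, h2, h3⟩; exact ⟨h1, h2, VL_of_le J t h3⟩
  · rintro ⟨h1, h2, h3⟩; exact ⟨h1, h2, le_of_VL_dec J t h3 h2⟩

theorem build_length_le (l : List (A × ℕ)) : (build l).length ≤ l.length := by
  induction l using List.reverseRecOn with
  | nil => simp [build]
  | append_singleton l x ih =>
    rw [build_snoc, addL_length, List.length_append, List.length_singleton]
    split_ifs <;> omega

theorem VL_bound (l : List (A × ℕ)) (h : VL [] l) : ∀ x ∈ l, x.2 < l.length := by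
  induction l using List.reverseRecOn with
  | nil => simp
  | append_singleton l x ih =>
    rw [VL_append, VL_singleton] at h
    have h2 := build_length_le l
    have h3 : x.2 ≤ (build l).length := h.2
    intro y hy
    rw [List.length_append, List.length_singleton]
    rcases List.mem_append.1 hy with hy | hy
    · have := ih h.1 y hy; omega
    · simp at hy; subst hy; omega

/-- All sequences with letters `w` and rows less than `n`. -/
noncomputable def seqs (n : ℕ) : List A → Finset (List (A × ℕ))
  | [] => {[]}
  | a :: w => by
    classical
    exact (Finset.range n ×ˢ seqs n w).image (fun p => (a, p.1) :: p.2)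

theorem mem_seqs (n : ℕ) (w : List A) (l : List (A × ℕ)) :
    l ∈ seqs n w ↔ l.map Prod.fst = w ∧ ∀ x ∈ l, x.2 < n := by
  classical
  induction w generalizing l with
  | nil => simp [seqs]; rintro rfl; simp
  | cons a w ih =>
    rw [seqs, Finset.mem_image]
    constructor
    · rintro ⟨⟨i, l'⟩, h1, rfl⟩
      rw [Finset.mem_product, ih, Finset.mem_range] at h1
      refine ⟨by simp [h1.2.1], ?_⟩
      intro x hx
      rcases List.mem_cons.1 hx with rfl | hx
      · exact h1.1
      · exact h1.2.2 x hx
    · rintro ⟨h1, h2⟩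
      cases l with
      | nil => simp at h1
      | cons x l =>
        simp at h1
        refine ⟨(x.2, l), ?_, by simp [← h1.1]⟩
        rw [Finset.mem_product, ih, Finset.mem_range]
        exact ⟨h2 x (by simp), h1.2, fun y hy => h2 y (by simp [hy])⟩

open Classical in
/-- Valid sequences with given cut. -/
noncomputable def Seq (C : Sentence A) : Finset (List (A × ℕ)) :=
  (seqs C.flatten.length C.flatten).filter (fun l => VL [] l ∧ cut l = C)

theorem mem_Seq (C : Sentence A) (l : List (A × ℕ)) : l ∈ Seq C ↔ VL [] l ∧ cut l = C := by
  classical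
  rw [Seq, Finset.mem_filter, mem_seqs]
  constructor
  · exact fun h => h.2
  · rintro ⟨h1, h2⟩
    have h3 := cut_flatten l
    rw [h2] at h3
    refine ⟨⟨h3.symm, ?_⟩, h1, h2⟩
    rw [h3, List.length_map]
    exact VL_bound l h1

theorem Seq_mul (C : Sentence A) (u w : List A) (hu : u ≠ []) (hw : w ≠ []) (F : Sentence A → NF A) :
    ∑ l ∈ Seq (C ++ [u]), ∑ t ∈ tset (build l).length w, F (t.foldl addL (build l)) =
      ∑ l ∈ Seq (C ++ [u] ++ [w]), F (build l) + ∑ l ∈ Seq (C ++ [u ++ w]), F (build l) := by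
  classical
  have hdis : Disjoint (Seq (C ++ [u] ++ [w])) (Seq (C ++ [u ++ w])) := by
    rw [Finset.disjoint_left]
    intro l h1 h2
    rw [mem_Seq] at h1 h2
    have := congrArg List.length (h1.2.symm.trans h2.2)
    simp at this
  rw [← Finset.sum_union hdis, Finset.sum_sigma']
  refine Finset.sum_bij (fun p _ => p.1 ++ p.2) ?_ ?_ ?_ ?_
  · rintro ⟨l, t⟩ h
    rw [Finset.mem_sigma, mem_Seq, mem_tset_iff] at h
    obtain ⟨⟨h1, h2⟩, h3, h4, h5⟩ := h
    simp only at h1 h2 h3 h4 h5 ⊢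
    rw [Finset.mem_union, mem_Seq, mem_Seq]
    have hv : VL [] (l ++ t) := by rw [VL_append]; exact ⟨h1, h5⟩
    cases t with
    | nil => simp at h3; exact absurd h3 hw
    | cons x t =>
      by_cases ha : asc l x
      · left
        rw [cut_append_asc l t x ha h4, h2, h3]
        exact ⟨hv, rfl⟩
      · right
        rw [cut_append_not l t x ha h4, h2, h3, gl_snoc]
        exact ⟨hv, rfl⟩
  · rintro ⟨l, t⟩ h ⟨l', t'⟩ h' he
    rw [Finset.mem_sigma, mem_Seq, mem_tset_iff] at h h'
    obtain ⟨⟨h1, h2⟩, h3, h4, h5⟩ := h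
    obtain ⟨⟨h1', h2'⟩, h3', h4', h5'⟩ := h'
    simp only at *
    have hl : t.length = t'.length := by
      have := congrArg List.length (h3.trans h3'.symm); simpa using this
    obtain ⟨e1, e2⟩ := List.append_inj' he hl
    subst e1; subst e2; rfl
  · intro l h
    rw [Finset.mem_union, mem_Seq, mem_Seq] at h
    rcases h with ⟨h1, h2⟩ | ⟨h1, h2⟩
    · obtain ⟨l', x, t, rfl, h3, h4, h5, h6⟩ := cut_decomp _ _ _ h2
      rw [VL_append] at h1
      refine ⟨⟨l', x :: t⟩, ?_, rfl⟩
      rw [Finset.mem_sigma, mem_Seq, mem_tset_iff]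
      exact ⟨⟨h1.1, h3⟩, h4, h5, h1.2⟩
    · obtain ⟨l', x, t, rfl, h3, h4, h5, h6⟩ := cut_decomp _ _ _ h2
      obtain ⟨t1, t2, h7, h8, h9⟩ := List.map_eq_append_iff.1 h4
      cases t1 with
      | nil => simp at h8; exact absurd h8 hu
      | cons y t1 =>
        have hxy : x = y := by simp at h7; exact h7.1
        subst hxy
        rw [h7] at h1 h5
        refine ⟨⟨l' ++ x :: t1, t2⟩, ?_, by simp [h7]⟩
        rw [← List.append_assoc, VL_append] at h1
        unfold Dec at h5
        rw [List.pairwise_append] at h5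
        rw [Finset.mem_sigma, mem_Seq, mem_tset_iff]
        refine ⟨⟨h1.1, ?_⟩, h9, h5.2.1, h1.2⟩
        simp only
        rw [cut_append_asc l' t1 x h6 h5.1, h3, h8]
  · rintro ⟨l, t⟩ h
    simp only
    rw [build_append]

theorem Seq_nil : Seq ([] : Sentence A) = {[]} := by
  ext l
  rw [mem_Seq, Finset.mem_singleton]
  constructor
  · rintro ⟨_, h⟩
    by_contra hc
    exact cut_ne' hc h
  · rintro rfl; exact ⟨trivial, rfl⟩

theorem Seq_single (w : List A) (hw : w ≠ []) : Seq [w] = {w.map z0} := by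
  ext l
  rw [mem_Seq, Finset.mem_singleton]
  constructor
  · rintro ⟨h0, h⟩
    obtain ⟨l', x, t, rfl, h3, h4, h5, h6⟩ := cut_decomp l [] w h
    have : l' = [] := by
      by_contra hc
      exact cut_ne' hc h3
    subst this
    have := (mem_tset_iff [] w (x :: t)).2 ⟨h4, h5, h0⟩
    simpa [tset] using this
  · intro h
    have : l ∈ tset ([] : Sentence A).length w := by simp [tset, h]
    rw [mem_tset_iff] at this
    obtain ⟨h1, h2, h3⟩ := this
    refine ⟨h3, ?_⟩
    cases l with
    | nil => simp at h1; exact absurd h1 hw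
    | cons x t =>
      have := cut_append_asc [] t x (by simp [asc]) h2
      rw [h1] at this
      simpa [cut] using this

theorem rib_expand (C : Sentence A) (hC : IsSentence C) :
    ribF C = ∑ l ∈ Seq C, immF (build l) := by
  induction hn : C.length using Nat.strong_induction_on generalizing C with
  | _ n ih =>
  rcases List.eq_nil_or_concat' C with rfl | ⟨C1, w, rfl⟩
  · rw [Seq_nil, ribF_nil]; simp [build, immF]
  have hw : w ≠ [] := hC w (by simp)
  rcases List.eq_nil_or_concat' C1 with rfl | ⟨C0, u, rfl⟩
  · rw [List.nil_append, ribF_single w hw, Seq_single w hw, Finset.sum_singleton, build,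
      foldl_z0_nil, immF_cw]
    cases w with
    | nil => exact absurd rfl hw
    | cons a w => rfl
  · have hu : u ≠ [] := hC u (by simp)
    have hC1 : IsSentence (C0 ++ [u]) := fun v hv => hC v (List.mem_append_left _ hv)
    have hC2 : IsSentence (C0 ++ [u ++ w]) := by
      intro v hv
      rcases List.mem_append.1 hv with hv | hv
      · exact hC v (by simp [hv])
      · simp at hv; simp [hv, hu]
    simp only [List.length_append, List.length_singleton] at hn
    have i1 := ih (C0 ++ [u]).length (by simp; omega) _ hC1 rfl
    have i2 := ih (C0 ++ [u ++ w]).length (by simp; omega) _ hC2 rfl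
    have h1 := rib_mul C0 u w hC1 hw
    rw [i1, i2, map_sum] at h1
    simp only [pieri] at h1
    rw [Seq_mul C0 u w hu hw immF] at h1
    exact (add_right_cancel h1).symm

end PartFive

section PartSix
variable {A : Type*}

/-- Weighted size with an offset. -/
def Phi : ℕ → Sentence A → ℕ
  | _, [] => 0
  | o, w :: C => o * w.length + Phi (o + 1) C

theorem Phi_append (o : ℕ) (C D : Sentence A) : Phi o (C ++ D) = Phi o C + Phi (o + C.length) D := by
  induction C generalizing o with
  | nil => simp [Phi]
  | cons w C ih =>
    simp only [List.cons_append, Phi, ih, List.length_cons]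
    rw [show o + 1 + C.length = o + (C.length + 1) by omega]; omega

theorem Phi_modify (o k : ℕ) (J : Sentence A) (a : A) (h : k < J.length) :
    Phi o (J.modify k (fun w => w ++ [a])) = Phi o J + (o + k) := by
  induction J generalizing o k with
  | nil => simp at h
  | cons w J ih =>
    cases k with
    | zero => simp [Phi]; ring
    | succ k =>
      simp only [List.length_cons] at h
      simp only [List.modify_succ_cons, Phi]
      rw [ih (o + 1) k (by omega)]; omega

theorem Phi_addL (J : Sentence A) (x : A × ℕ) (h : x.2 ≤ J.length) :
    Phi 0 (addL J x) = Phi 0 J + x.2 := by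
  unfold addL
  split_ifs with h1
  · rw [Phi_modify 0 _ _ _ h1]; omega
  · rw [Phi_append]; simp [Phi]; omega

theorem Phi_gl (X : Sentence A) (u : List A) (a : A) :
    Phi 0 (X ++ [u ++ [a]]) = Phi 0 (X ++ [u]) + X.length := by
  rw [Phi_append, Phi_append]; simp [Phi]; ring

/-- The canonical sequence of a sentence. -/
def label : ℕ → Sentence A → List (A × ℕ)
  | _, [] => []
  | o, w :: C => w.map (fun a => (a, o)) ++ label (o + 1) C

theorem label_append (o : ℕ) (C D : Sentence A) :
    label o (C ++ D) = label o C ++ label (o + C.length) D := by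
  induction C generalizing o with
  | nil => simp [label]
  | cons w C ih =>
    simp only [List.cons_append, label, ih, List.length_cons]
    rw [show o + 1 + C.length = o + (C.length + 1) by omega]; simp

theorem label_snoc (C : Sentence A) (w : List A) :
    label 0 (C ++ [w]) = label 0 C ++ w.map (fun a => (a, C.length)) := by
  rw [label_append]; simp [label]

theorem label_bound (o : ℕ) (C : Sentence A) : ∀ x ∈ label o C, x.2 < o + C.length := by
  induction C generalizing o with
  | nil => simp [label]
  | cons w C ih =>
    intro x hx
    rw [label, List.mem_append] at hx
    rw [List.length_cons]
    rcases hx with hx | hx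
    · rw [List.mem_map] at hx
      obtain ⟨a, _, rfl⟩ := hx
      simp only; omega
    · have := ih _ x hx; omega

theorem tri (l : List (A × ℕ)) (h : VL [] l) :
    (build l).length ≤ (cut l).length ∧ (∀ y ∈ l.getLast?, y.2 + 1 ≤ (cut l).length) ∧
    Phi 0 (build l) ≤ Phi 0 (cut l) ∧ (Phi 0 (build l) = Phi 0 (cut l) → l = label 0 (cut l)) := by
  induction l using List.reverseRecOn with
  | nil => simp [build, cut, label]
  | append_singleton l x ih =>
    rw [VL_append, VL_singleton] at h
    have hx : x.2 ≤ (build l).length := h.2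
    obtain ⟨i1, i2, i3, i4⟩ := ih h.1
    rw [build_snoc, addL_length, Phi_addL _ _ hx]
    by_cases ha : asc l x
    · rw [cut_snoc_asc l x ha, Phi_append]
      simp only [List.length_append, List.length_singleton, Phi]
      refine ⟨by split_ifs <;> omega, ?_, by omega, ?_⟩
      · intro y hy
        simp at hy; subst hy; omega
      · intro he
        have h1 := i4 (by omega)
        rw [label_snoc, ← h1]
        congr 1
        have : x.2 = (cut l).length := by omega
        simp [← this]
    · rcases List.eq_nil_or_concat' (cut l) with h0 | ⟨X, u, h0⟩
      · exact absurd h0 (cut_ne' (not_asc_ne ha))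
      rw [cut_snoc_not l x ha]
      rw [h0] at i1 i2 i3 i4 ⊢
      rw [gl_snoc, Phi_gl]
      have : ∃ y ∈ l.getLast?, x.2 ≤ y.2 := by
        unfold asc at ha; push Not at ha; exact ha
      obtain ⟨y, hy, hxy⟩ := this
      have hy2 := i2 y hy
      simp only [List.length_append, List.length_singleton] at i1 hy2 ⊢
      refine ⟨by split_ifs <;> omega, ?_, by omega, ?_⟩
      · intro z hz
        simp at hz; subst hz; omega
      · intro he
        have h1 := i4 (by omega)
        rw [label_snoc] at h1 ⊢
        have : x.2 = X.length := by omega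
        rw [List.map_append, ← List.append_assoc, ← h1]
        simp [← this]

theorem modify_last (C : Sentence A) (v : List A) (f : List A → List A) :
    (C ++ [v]).modify C.length f = C ++ [f v] := by
  induction C with
  | nil => simp
  | cons w C ih => simp [ih]

theorem foldl_last (C : Sentence A) (v w : List A) :
    (w.map (fun a => (a, C.length))).foldl addL (C ++ [v]) = C ++ [v ++ w] := by
  induction w generalizing v with
  | nil => simp
  | cons a w ih =>
    have : addL (C ++ [v]) (a, C.length) = C ++ [v ++ [a]] := by
      simp [addL, modify_last]
    simp only [List.map_cons, List.foldl_cons, this, ih]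
    simp

theorem label_mem (C : Sentence A) (hC : IsSentence C) :
    label 0 C ∈ Seq C ∧ build (label 0 C) = C := by
  induction C using List.reverseRecOn with
  | nil => simp [Seq_nil, label, build]
  | append_singleton C w ih =>
    have hw : w ≠ [] := hC w (by simp)
    obtain ⟨h1, h2⟩ := ih (fun v hv => hC v (by simp [hv]))
    rw [mem_Seq] at h1 ⊢
    rw [label_snoc, VL_append, build_append, h2]
    cases w with
    | nil => exact absurd rfl hw
    | cons a w =>
      refine ⟨⟨⟨h1.1, ?_⟩, ?_⟩, ?_⟩
      · change VL (build (label 0 C)) _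
        rw [h2]
        apply VL_of_le
        intro x hx
        rw [List.mem_map] at hx
        obtain ⟨b, _, rfl⟩ := hx
        exact le_rfl
      · rw [List.map_cons, cut_append_asc, h1.2]
        · simp [Function.comp_def]
        · intro y hy
          have := label_bound 0 C y (List.mem_of_getLast? hy)
          simpa using this
        · have : ∀ x ∈ ((a :: w).map (fun a => (a, C.length))), x.2 = C.length := by
            intro x hx
            rw [List.mem_map] at hx
            obtain ⟨b, _, rfl⟩ := hx
            rfl
          rw [List.map_cons] at this
          exact List.Pairwise.imp_of_mem (fun ha hb _ => by
            rw [this _ ha, this _ hb]) (List.pairwise_of_forall (fun _ _ => trivial) : List.Pairwise (fun _ _ => True) _)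
      · have : addL C (a, C.length) = C ++ [[a]] := by simp [addL]
        rw [List.map_cons, List.foldl_cons, this, foldl_last]; simp

theorem Seq_build_eq {C : Sentence A} {l : List (A × ℕ)} (h : l ∈ Seq C) (hb : build l = C) :
    l = label 0 C := by
  rw [mem_Seq] at h
  have := (tri l h.1).2.2.2
  rw [h.2, hb] at this
  exact this rfl

theorem Seq_build_ne {C : Sentence A} {l : List (A × ℕ)} (hC : IsSentence C) (h : l ∈ Seq C)
    (hb : build l ≠ C) : Phi 0 (build l) < Phi 0 C := by
  rw [mem_Seq] at h
  have h1 := (tri l h.1).2.2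
  rw [h.2] at h1
  refine lt_of_le_of_ne h1.1 (fun he => hb ?_)
  rw [h1.2 he]
  exact (label_mem C hC).2

theorem modify_perm (J : Sentence A) (k : ℕ) (a : A) (h : k < J.length) :
    (J.modify k (fun w => w ++ [a])).flatten.Perm (J.flatten ++ [a]) := by
  induction J generalizing k with
  | nil => simp at h
  | cons w J ih =>
    cases k with
    | zero =>
      simp only [List.modify_zero_cons, List.flatten_cons, List.append_assoc]
      exact List.Perm.append_left w List.perm_append_comm
    | succ k =>
      simp only [List.length_cons] at h
      simp only [List.modify_succ_cons, List.flatten_cons, List.append_assoc]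
      exact List.Perm.append_left w (ih k (by omega))

theorem addL_perm (J : Sentence A) (x : A × ℕ) : (addL J x).flatten.Perm (J.flatten ++ [x.1]) := by
  unfold addL
  split_ifs with h
  · exact modify_perm _ _ _ h
  · simp

theorem build_perm (l : List (A × ℕ)) : (build l).flatten.Perm (l.map Prod.fst) := by
  induction l using List.reverseRecOn with
  | nil => simp [build]
  | append_singleton l x ih =>
    rw [build_snoc, List.map_append]
    exact (addL_perm _ _).trans (List.Perm.append_right _ ih)

theorem modify_isSentence (J : Sentence A) (k : ℕ) (a : A) (h : IsSentence J) :
    IsSentence (J.modify k (fun w => w ++ [a])) := by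
  induction J generalizing k with
  | nil => simpa using h
  | cons w J ih =>
    rw [isSentence_cons] at h
    cases k with
    | zero => simp only [List.modify_zero_cons]; rw [isSentence_cons]; exact ⟨by simp, h.2⟩
    | succ k => simp only [List.modify_succ_cons]; rw [isSentence_cons]; exact ⟨h.1, ih k h.2⟩

theorem build_isSentence (l : List (A × ℕ)) : IsSentence (build l) := by
  induction l using List.reverseRecOn with
  | nil => exact isSentence_nil
  | append_singleton l x ih =>
    rw [build_snoc]
    unfold addL
    split_ifs
    · exact modify_isSentence _ _ _ ih
    · rw [isSentence_append]; exact ⟨ih, by simp [IsSentence]⟩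

theorem Seq_perm {C : Sentence A} {l : List (A × ℕ)} (h : l ∈ Seq C) :
    (build l).flatten.Perm C.flatten := by
  rw [mem_Seq] at h
  rw [← h.2, cut_flatten]
  exact build_perm l

open Classical in
/-- Sequence count. -/
noncomputable def cnt (K C : Sentence A) : ℕ := ((Seq C).filter (fun l => build l = K)).card

theorem cnt_self (C : Sentence A) (hC : IsSentence C) : cnt C C = 1 := by
  classical
  rw [cnt, Finset.card_eq_one]
  refine ⟨label 0 C, ?_⟩
  ext l
  rw [Finset.mem_filter, Finset.mem_singleton]
  constructor
  · exact fun h => Seq_build_eq h.1 h.2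
  · rintro rfl; exact label_mem C hC

theorem cnt_ne {K C : Sentence A} (h : cnt K C ≠ 0) : ∃ l ∈ Seq C, build l = K := by
  classical
  rw [cnt, Finset.card_ne_zero] at h
  obtain ⟨l, hl⟩ := h
  rw [Finset.mem_filter] at hl
  exact ⟨l, hl⟩

end PartSix

section PartSeven
variable {A : Type*}

/-- Composition with an offset. -/
def compO (a : ℕ) (ds : List ℕ) (n : ℕ) : List ℕ :=
  List.zipWith (fun a b => b - a) (a :: ds) (ds ++ [n])

theorem compO_nil (a n : ℕ) : compO a [] n = [n - a] := by simp [compO]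

theorem compO_cons (a d : ℕ) (ds : List ℕ) (n : ℕ) :
    compO a (d :: ds) n = (d - a) :: compO d ds n := by simp [compO]

theorem compO_shift (a : ℕ) (ds : List ℕ) (n : ℕ) (h : ∀ d ∈ ds, a + 1 ≤ d) (hn : a + 1 ≤ n) :
    ∃ k r, compO (a + 1) ds n = k :: r ∧ compO a ds n = (k + 1) :: r := by
  cases ds with
  | nil => exact ⟨n - (a + 1), [], compO_nil _ _, by rw [compO_nil]; congr 1; omega⟩
  | cons d ds =>
    have := h d (by simp)
    exact ⟨d - (a + 1), _, compO_cons _ _ _ _, by rw [compO_cons]; congr 1; omega⟩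

theorem split_cut (l : List (A × ℕ)) (hl : l ≠ []) (o : ℕ) (r : ℕ → ℕ)
    (hr : ∀ (j : ℕ) (hj : j < l.length), r (o + 1 + j) = (l[j]).2) :
    splitByComp (l.map Prod.fst) (compO o
      ((List.range' (o + 1) (l.length - 1)).filter (fun i => decide (r i < r (i + 1))))
      (o + l.length)) = cut l := by
  induction l generalizing o with
  | nil => exact absurd rfl hl
  | cons x l ih =>
    cases l with
    | nil => simp [compO_nil, splitByComp, cut]
    | cons y l =>
      have ih' := ih (by simp) (o + 1) (by
        intro j hj
        have := hr (j + 1) (by simp at hj ⊢; omega)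
        rw [show o + 1 + 1 + j = o + 1 + (j + 1) by omega, this]; rfl)
      have r0 : r (o + 1) = x.2 := hr 0 (by simp)
      have r1 : r (o + 1 + 1) = y.2 := hr 1 (by simp)
      have e1 : (x :: y :: l).length - 1 = l.length + 1 := by simp
      have e2 : (y :: l).length - 1 = l.length := by simp
      have e3 : o + (x :: y :: l).length = o + 1 + (y :: l).length := by simp; omega
      rw [e2] at ih'
      rw [e1, e3, List.range'_succ, List.filter_cons, r0, r1, cut_cons_cons]
      have hF : ∀ d ∈ (List.range' (o + 1 + 1) l.length).filter (fun i => decide (r i < r (i + 1))),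
          o + 1 ≤ d := by
        intro d hd
        have := List.mem_of_mem_filter hd
        rw [List.mem_range'_1] at this
        omega
      by_cases h : x.2 < y.2
      · rw [if_pos (by simpa using h), if_neg (by omega), compO_cons, List.map_cons,
          show o + 1 - o = 1 by omega]
        rw [splitByComp]
        simp only [List.take_succ_cons, List.take_zero, List.drop_succ_cons, List.drop_zero]
        rw [ih']
      · rw [if_neg (by simpa using h), if_pos (by omega)]
        obtain ⟨k, t, h1, h2⟩ := compO_shift o _ (o + 1 + (y :: l).length) hF (by omega)
        rw [h1] at ih'
        rw [h2, ← ih', List.map_cons]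
        rfl

theorem findIdx_modify (f : Filling) (r m v : ℕ) (h : v ≠ m) :
    rowOf (f.modify r (fun w => w ++ [m])) v = rowOf f v := by
  unfold rowOf
  induction f generalizing r with
  | nil => simp
  | cons w f ih =>
    cases r with
    | zero => simp [List.findIdx_cons, h]
    | succ r =>
      rw [List.modify_succ_cons, List.findIdx_cons, List.findIdx_cons, ih]

theorem rowOf_modify_new (f : Filling) (r m : ℕ) (hm : m ∉ f.flatten) (hr : r < f.length) :
    rowOf (f.modify r (fun w => w ++ [m])) m = r := by
  unfold rowOf
  induction f generalizing r with
  | nil => simp at hr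
  | cons w f ih =>
    simp only [List.flatten_cons, List.mem_append, not_or] at hm
    cases r with
    | zero => simp [List.findIdx_cons]
    | succ r =>
      simp only [List.length_cons] at hr
      rw [List.modify_succ_cons, List.findIdx_cons, ih r hm.2 (by omega)]
      simp [hm.1]

theorem rowOf_lt {f : Filling} {v : ℕ} (h : v ∈ f.flatten) : rowOf f v < f.length := by
  unfold rowOf
  rw [List.findIdx_lt_length]
  rw [List.mem_flatten] at h
  obtain ⟨w, h1, h2⟩ := h
  exact ⟨w, h1, by simpa using h2⟩

theorem mem_rowOf {f : Filling} {v : ℕ} (h : v ∈ f.flatten) : v ∈ f.getD (rowOf f v) [] := by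
  have h1 := rowOf_lt h
  have := List.findIdx_getElem (p := fun row : List ℕ => row.contains v) (xs := f) (w := h1)
  rw [List.getD_eq_getElem _ _ h1]
  exact List.contains_iff_mem.1 this

theorem rowOf_addL_old (f : Filling) (r m v : ℕ) (hv : v ∈ f.flatten) (h : v ≠ m) :
    rowOf (addL f (m, r)) v = rowOf f v := by
  unfold addL
  split_ifs
  · exact findIdx_modify _ _ _ _ h
  · have := rowOf_lt hv
    unfold rowOf at this ⊢
    rw [List.findIdx_append, if_pos this]

theorem rowOf_addL_new (f : Filling) (r m : ℕ) (hm : m ∉ f.flatten) (hr : r ≤ f.length) :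
    rowOf (addL f (m, r)) m = r := by
  unfold addL
  simp only
  split_ifs with h
  · exact rowOf_modify_new _ _ _ hm h
  · have h1 : ¬ (List.findIdx (fun row => row.contains m) f < f.length) := by
      rw [List.findIdx_lt_length]
      rintro ⟨w, h1, h2⟩
      exact hm (List.mem_flatten.2 ⟨w, h1, by simpa using h2⟩)
    unfold rowOf
    rw [List.findIdx_append, if_neg h1]
    simp; omega

theorem addL_getD {B : Type*} (J : Sentence B) (x : B × ℕ) (k : ℕ) (hk : k < J.length) :
    (addL J x).getD k [] = J.getD k [] ++ (if x.2 = k then [x.1] else []) := by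
  unfold addL
  split_ifs with h1 h2 h2
  · rw [List.getD_eq_getElem _ _ (by simpa using hk), List.getD_eq_getElem _ _ hk,
      List.getElem_modify, if_pos h2]
  · rw [List.getD_eq_getElem _ _ (by simpa using hk), List.getD_eq_getElem _ _ hk,
      List.getElem_modify, if_neg h2]; simp
  · omega
  · rw [List.getD_append _ _ _ _ hk]; simp

theorem addL_getD_new {B : Type*} (J : Sentence B) (x : B × ℕ) (hk : x.2 ≤ J.length) :
    (addL J x).getD x.2 [] = J.getD x.2 [] ++ [x.1] := by
  by_cases h : x.2 < J.length
  · rw [addL_getD J x _ h, if_pos rfl]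
  · have : x.2 = J.length := by omega
    unfold addL
    rw [if_neg h, this]
    simp

theorem getD_len {K : Sentence A} {f : Filling} (h : f.map List.length = K.map List.length) (k : ℕ) :
    (f.getD k []).length = (K.getD k []).length := by
  have := congrArg (fun L => L.getD k 0) h
  simp only [List.getD_eq_getElem?_getD, List.getElem?_map] at this ⊢
  cases h1 : f[k]? <;> cases h2 : K[k]? <;> simp_all

theorem colorOf_old [Inhabited A] (K : Sentence A) (f : Filling) (a : A) (r m v : ℕ)
    (hs : f.map List.length = K.map List.length) (hv : v ∈ f.flatten) (h : v ≠ m) :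
    colorOf (addL K (a, r)) (addL f (m, r)) v = colorOf K f v := by
  have hl : f.length = K.length := by simpa using congrArg List.length hs
  have h1 := rowOf_lt hv
  have h2 := mem_rowOf hv
  unfold colorOf
  rw [rowOf_addL_old f r m v hv h, addL_getD _ _ _ h1, addL_getD _ _ _ (hl ▸ h1)]
  have h3 : (f.getD (rowOf f v) []).findIdx (fun x => x == v) < (f.getD (rowOf f v) []).length := by
    rw [List.findIdx_lt_length]; exact ⟨v, h2, by simp⟩
  rw [List.findIdx_append, if_pos h3, List.getD_append _ _ _ _ (by rw [← getD_len hs]; exact h3)]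

theorem colorOf_new [Inhabited A] (K : Sentence A) (f : Filling) (a : A) (r m : ℕ)
    (hs : f.map List.length = K.map List.length) (hm : m ∉ f.flatten) (hr : r ≤ f.length) :
    colorOf (addL K (a, r)) (addL f (m, r)) m = a := by
  have hl : f.length = K.length := by simpa using congrArg List.length hs
  unfold colorOf
  rw [rowOf_addL_new f r m hm hr]
  have e1 := addL_getD_new f (m, r) hr
  have e2 := addL_getD_new K (a, r) (hl ▸ hr)
  simp only at e1 e2
  rw [e1, e2]
  have h3 : ¬ (f.getD r []).findIdx (fun x => x == m) < (f.getD r []).length := by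
    rw [List.findIdx_lt_length]
    rintro ⟨w, h1, h2⟩
    simp only [beq_iff_eq] at h2
    subst h2
    apply hm
    by_cases hr' : r < f.length
    · rw [List.getD_eq_getElem _ _ hr'] at h1
      exact List.mem_flatten.2 ⟨_, List.getElem_mem _, h1⟩
    · rw [List.getD_eq_default _ _ (by omega)] at h1; simp at h1
  rw [List.findIdx_append, if_neg h3, getD_len hs]
  simp

/-- Filling built from a sequence. -/
def fl (l : List (A × ℕ)) : Filling := build ((l.zipIdx 1).map (fun p => (p.2, p.1.2)))

theorem fl_snoc (l : List (A × ℕ)) (x : A × ℕ) : fl (l ++ [x]) = addL (fl l) (l.length + 1, x.2) := by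
  unfold fl
  rw [List.zipIdx_append, List.map_append]
  simp only [List.zipIdx_singleton, List.map_singleton]
  rw [build_snoc, add_comm 1]

theorem addL_split {B : Type*} (J : Sentence B) (x : B × ℕ) (h : x.2 < J.length) :
    ∃ J1 w J2, J1.length = x.2 ∧ J = J1 ++ w :: J2 ∧ addL J x = J1 ++ (w ++ [x.1]) :: J2 := by
  refine ⟨J.take x.2, J[x.2], J.drop (x.2 + 1), ?_, ?_, ?_⟩
  · simp; omega
  · simp
  · unfold addL
    rw [if_pos h, List.modify_eq_take_cons_drop h]

theorem map_len_addL (K : Sentence A) (f : Filling) (a : A) (m r : ℕ)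
    (h : f.map List.length = K.map List.length) :
    (addL f (m, r)).map List.length = (addL K (a, r)).map List.length := by
  have hl : f.length = K.length := by simpa using congrArg List.length h
  by_cases hr : r < f.length
  · obtain ⟨J1, w, J2, e1, e2, e3⟩ := addL_split f (m, r) hr
    obtain ⟨K1, u, K2, d1, d2, d3⟩ := addL_split K (a, r) (hl ▸ hr)
    rw [e3, d3]
    rw [e2, d2] at h
    simp only [List.map_append, List.map_cons] at h ⊢
    obtain ⟨h1, h2⟩ := List.append_inj h (by simp [e1, d1])
    simp at h2 ⊢
    rw [h1, h2.1, h2.2]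
  · unfold addL
    rw [if_neg (by simpa using hr), if_neg (by simpa [hl] using hr)]
    simp [h]

theorem cit_addL (K : Sentence A) (f : Filling) (a : A) (r n : ℕ) (hK : IsSentence K)
    (h : IsCIT K f) (hp : f.flatten.Perm (List.range' 1 n)) :
    IsCIT (addL K (a, r)) (addL f (n + 1, r)) := by
  obtain ⟨h1, h2, h3, h4⟩ := h
  have hb : ∀ x ∈ f.flatten, x < n + 1 := by
    intro x hx
    have := hp.mem_iff.1 hx
    rw [List.mem_range'_1] at this; omega
  have hne : ∀ row ∈ f, row ≠ [] := by
    intro row hrow he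
    have : row.length ∈ K.map List.length := by rw [← h1]; exact List.mem_map_of_mem hrow
    rw [List.mem_map] at this
    obtain ⟨w, hw, hw2⟩ := this
    subst he
    exact hK w hw (by simpa using hw2)
  refine ⟨map_len_addL K f a _ r h1, ?_, ?_, ?_⟩
  · intro row hrow
    by_cases hr : r < f.length
    · obtain ⟨J1, w, J2, e1, e2, e3⟩ := addL_split f (n + 1, r) hr
      rw [e3] at hrow
      have hrow' : row ∈ f ∨ row = w ++ [n + 1] := by
        rw [e2]; simp at hrow ⊢; tauto
      rcases hrow' with hrow' | rfl
      · exact h2 row hrow'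
      · have hw : w ∈ f := by rw [e2]; simp
        have h5 := h2 w hw
        simp only [List.Chain'] at h5 ⊢
        rw [List.isChain_iff_pairwise] at h5 ⊢
        rw [List.pairwise_append]
        refine ⟨h5, by simp, ?_⟩
        intro x hx y hy
        simp at hy
        have := hb x (List.mem_flatten.2 ⟨w, hw, hx⟩)
        omega
    · unfold addL at hrow
      rw [if_neg (by simpa using hr)] at hrow
      rcases List.mem_append.1 hrow with hrow | hrow
      · exact h2 row hrow
      · simp at hrow; subst hrow; exact List.isChain_singleton _
  · by_cases hr : r < f.length
    · obtain ⟨J1, w, J2, e1, e2, e3⟩ := addL_split f (n + 1, r) hr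
      have hw : w ≠ [] := hne w (by rw [e2]; simp)
      have : (addL f (n + 1, r)).filterMap List.head? = f.filterMap List.head? := by
        rw [e3, e2]
        cases w with
        | nil => exact absurd rfl hw
        | cons b w => simp
      rw [this]; exact h3
    · unfold addL
      rw [if_neg (by simpa using hr)]
      simp only [List.Chain'] at h3 ⊢
      rw [List.filterMap_append]
      rw [List.isChain_iff_pairwise] at h3 ⊢
      rw [List.pairwise_append]
      refine ⟨h3, by simp, ?_⟩
      intro x hx y hy
      simp at hy
      rw [List.mem_filterMap] at hx
      obtain ⟨w, hw, hx⟩ := hx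
      have := hb x (List.mem_flatten.2 ⟨w, hw, List.mem_of_mem_head? hx⟩)
      omega
  · intro x hx
    have := (addL_perm f (n + 1, r)).mem_iff.1 hx
    rcases List.mem_append.1 this with h | h
    · exact h4 x h
    · simp at h; omega

theorem fl_perm (l : List (A × ℕ)) : (fl l).flatten.Perm (List.range' 1 l.length) := by
  induction l using List.reverseRecOn with
  | nil => simp [fl, build]
  | append_singleton l x ih =>
    rw [fl_snoc, List.length_append, List.length_singleton, List.range'_1_concat]
    refine (addL_perm _ _).trans ?_
    rw [add_comm 1]
    exact List.Perm.append_right _ ih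

theorem fl_nBoxes (l : List (A × ℕ)) : nBoxes (fl l) = l.length := by
  unfold nBoxes
  rw [(fl_perm l).length_eq]; simp

theorem fl_std (l : List (A × ℕ)) : IsStandardF (fl l) := by
  unfold IsStandardF
  rw [fl_nBoxes]; exact fl_perm l

theorem fl_cit (l : List (A × ℕ)) : IsCIT (build l) (fl l) := by
  induction l using List.reverseRecOn with
  | nil => exact ⟨rfl, by simp [fl, build], List.isChain_nil, by simp [fl, build]⟩
  | append_singleton l x ih =>
    rw [fl_snoc, build_snoc]
    exact cit_addL _ _ _ _ _ (build_isSentence l) ih (fl_perm l)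

theorem fl_get [Inhabited A] (l : List (A × ℕ)) (h : VL [] l) (i : ℕ) (hi : i < l.length) :
    rowOf (fl l) (i + 1) = (l[i]).2 ∧ colorOf (build l) (fl l) (i + 1) = (l[i]).1 := by
  induction l using List.reverseRecOn with
  | nil => simp at hi
  | append_singleton l x ih =>
    rw [VL_append, VL_singleton] at h
    have hx : x.2 ≤ (build l).length := h.2
    have hs := (fl_cit l).1
    have hl : (fl l).length = (build l).length := by simpa using congrArg List.length hs
    rw [fl_snoc, build_snoc]
    by_cases hil : i < l.length
    · have hm : i + 1 ∈ (fl l).flatten := by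
        rw [(fl_perm l).mem_iff, List.mem_range'_1]; omega
      rw [rowOf_addL_old _ _ _ _ hm (by omega), colorOf_old _ _ _ _ _ _ hs hm (by omega),
        List.getElem_append_left hil]
      exact ih h.1 hil
    · have : i = l.length := by simp at hi; omega
      subst this
      have hm : l.length + 1 ∉ (fl l).flatten := by
        rw [(fl_perm l).mem_iff, List.mem_range'_1]; omega
      rw [rowOf_addL_new _ _ _ hm (hl ▸ hx), colorOf_new _ _ _ _ _ hs hm (hl ▸ hx)]
      simp

theorem fl_coA [Inhabited A] (l : List (A × ℕ)) (h : VL [] l) : coA (build l) (fl l) = cut l := by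
  unfold coA
  rw [fl_nBoxes]
  split_ifs with h0
  · rw [List.length_eq_zero_iff] at h0; subst h0; rfl
  · have h1 : readWord (build l) (fl l) = l.map Prod.fst := by
      unfold readWord
      rw [fl_nBoxes]
      apply List.ext_getElem
      · simp
      · intro i h2 h3
        simp only [List.length_map, List.length_range] at h2
        simp only [List.getElem_map, List.getElem_range]
        exact (fl_get l h i h2).2
    have h2 := split_cut l (by rintro rfl; simp at h0) 0 (rowOf (fl l)) (by
      intro j hj
      rw [show 0 + 1 + j = j + 1 by omega]
      exact (fl_get l h j hj).1)
    rw [h1, ← h2]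
    unfold descList compOf compO
    rw [fl_nBoxes]
    simp only [zero_add]

theorem fl_inj [Inhabited A] (l l' : List (A × ℕ)) (h : VL [] l) (h' : VL [] l')
    (hb : build l = build l') (hf : fl l = fl l') : l = l' := by
  have hl : l.length = l'.length := by rw [← fl_nBoxes l, hf, fl_nBoxes]
  apply List.ext_getElem hl
  intro i h1 h2
  have e1 := fl_get l h i h1
  have e2 := fl_get l' h' i h2
  rw [hf, hb] at e1
  exact Prod.ext (e1.2.symm.trans e2.2) (e1.1.symm.trans e2.1)

theorem addL_mid {B : Type*} (J1 J2 : Sentence B) (w : List B) (b : B) :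
    addL (J1 ++ w :: J2) (b, J1.length) = J1 ++ (w ++ [b]) :: J2 := by
  unfold addL
  rw [if_pos (by simp)]
  induction J1 with
  | nil => simp
  | cons u J1 ih => simpa using ih

theorem fl_surj (n : ℕ) (K : Sentence A) (f : Filling) (hK : IsSentence K) (h : IsCIT K f)
    (hp : f.flatten.Perm (List.range' 1 n)) : ∃ l, VL [] l ∧ build l = K ∧ fl l = f := by
  induction n generalizing K f with
  | zero =>
    have hf : f = [] := by
      cases f with
      | nil => rfl
      | cons row f =>
        have : K ≠ [] := by
          rintro rfl
          have := h.1; simp at this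
        cases K with
        | nil => exact absurd rfl this
        | cons w K =>
          have h1 := h.1
          simp at hp h1
          rw [hp.1] at h1
          exact absurd (by simpa using h1.1.symm) (hK w (by simp))
    subst hf
    have : K = [] := by have := h.1; simpa using this.symm
    subst this
    exact ⟨[], trivial, rfl, rfl⟩
  | succ n ih =>
    obtain ⟨h1, h2, h3, h4⟩ := h
    have hb : ∀ x ∈ f.flatten, x ≤ n + 1 := by
      intro x hx
      have := hp.mem_iff.1 hx
      rw [List.mem_range'_1] at this; omega
    have hnd : f.flatten.Nodup := hp.nodup_iff.2 List.nodup_range'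
    have hmem : n + 1 ∈ f.flatten := by rw [hp.mem_iff, List.mem_range'_1]; omega
    rw [List.mem_flatten] at hmem
    obtain ⟨row, hrow, hmem⟩ := hmem
    have hrnd : row.Nodup := (List.nodup_flatten.1 hnd).1 row hrow
    obtain ⟨s, t, rfl⟩ := List.append_of_mem hmem
    have ht : t = [] := by
      cases t with
      | nil => rfl
      | cons y t =>
        exfalso
        have h5 := h2 _ hrow
        simp only [List.Chain'] at h5
        rw [List.isChain_iff_pairwise, List.pairwise_append, List.pairwise_cons] at h5
        have h6 := h5.2.1.1 y (by simp)
        have h7 := hb y (List.mem_flatten.2 ⟨_, hrow, by simp⟩)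
        have h8 : y = n + 1 := by omega
        subst h8
        rw [List.nodup_append, List.nodup_cons] at hrnd
        exact hrnd.2.1.1 (by simp)
    subst ht
    obtain ⟨F1, F2, rfl⟩ := List.append_of_mem hrow
    rw [List.map_append, List.map_cons, eq_comm, List.map_eq_append_iff] at h1
    obtain ⟨K1, K', rfl, hk1, hk'⟩ := h1
    rw [List.map_eq_cons_iff] at hk'
    obtain ⟨k, K2, rfl, hk, hk2⟩ := hk'
    have hkne : k ≠ [] := hK k (by simp)
    rcases List.eq_nil_or_concat' k with rfl | ⟨k, a, rfl⟩
    · exact absurd rfl hkne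
    have hlen : k.length = s.length := by simpa using hk
    have hl1 : K1.length = F1.length := by simpa using congrArg List.length hk1
    have hK1 : IsSentence K1 := fun w hw => hK w (by simp [hw])
    have hperm : ∀ f', (addL f' (n + 1, F1.length)) = F1 ++ (s ++ [n + 1]) :: F2 →
        f'.flatten.Perm (List.range' 1 n) := by
      intro f' hf'
      have e1 := addL_perm f' (n + 1, F1.length)
      rw [hf'] at e1
      have e2 := e1.symm.trans hp
      rw [List.range'_1_concat, add_comm 1] at e2
      exact (List.perm_append_right_iff _).1 e2
    have hfin : ∀ K' f', IsSentence K' → IsCIT K' f' → F1.length ≤ K'.length →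
        addL f' (n + 1, F1.length) = F1 ++ (s ++ [n + 1]) :: F2 →
        addL K' (a, F1.length) = K1 ++ (k ++ [a]) :: K2 →
        ∃ l, VL [] l ∧ build l = K1 ++ (k ++ [a]) :: K2 ∧ fl l = F1 ++ (s ++ [n + 1]) :: F2 := by
      intro K' f' q1 q2 q3 q4 q5
      obtain ⟨l, p1, p2, p3⟩ := ih K' f' q1 q2 (hperm f' q4)
      have hn : l.length = n := by
        rw [← fl_nBoxes l, p3, nBoxes, (hperm f' q4).length_eq]; simp
      refine ⟨l ++ [(a, F1.length)], ?_, ?_, ?_⟩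
      · rw [VL_append, VL_singleton]
        refine ⟨p1, ?_⟩
        change F1.length ≤ (build l).length
        rw [p2]; exact q3
      · rw [build_snoc, p2, q5]
      · rw [fl_snoc, p3, hn, q4]
    by_cases hs : s = []
    · subst hs
      have hk0 : k = [] := by simpa using hlen
      subst hk0
      have hF2 : F2 = [] := by
        cases F2 with
        | nil => rfl
        | cons r2 F2 =>
          exfalso
          cases K2 with
          | nil => simp at hk2
          | cons u K2 =>
            have hu : u ≠ [] := hK u (by simp)
            simp at hk2
            cases r2 with
            | nil => simp at hk2; exact hu hk2.1
            | cons y r2 =>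
              simp only [List.Chain'] at h3
              rw [List.isChain_iff_pairwise, List.filterMap_append, List.pairwise_append] at h3
              have h5 := h3.2.1
              simp at h5
              have := hb y (by simp)
              omega
      subst hF2
      have hK2 : K2 = [] := by simpa using hk2
      subst hK2
      refine hfin K1 F1 hK1 ⟨hk1.symm, fun r hr => h2 r (by simp [hr]), ?_,
        fun x hx => h4 x (by rw [List.flatten_append]; exact List.mem_append_left _ hx)⟩ hl1.ge ?_ ?_
      · rw [List.filterMap_append] at h3
        simp only [List.Chain'] at h3 ⊢
        exact (List.isChain_append.1 h3).1
      · simp [addL]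
      · simp [addL, ← hl1]
    · have hkn : k ≠ [] := by
        rintro rfl
        exact hs (by simpa using hlen.symm)
      refine hfin (K1 ++ k :: K2) (F1 ++ s :: F2) ?_ ⟨?_, ?_, ?_, ?_⟩ (by simp [hl1])
        (addL_mid _ _ _ _) (by rw [← hl1]; exact addL_mid _ _ _ _)
      · intro w hw
        simp at hw
        rcases hw with hw | rfl | hw
        · exact hK w (by simp [hw])
        · exact hkn
        · exact hK w (by simp [hw])
      · simp [hk1, hk2, hlen]
      · intro r hr
        simp at hr
        rcases hr with hr | rfl | hr
        · exact h2 r (by simp [hr])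
        · have := h2 _ hrow
          simp only [List.Chain'] at this ⊢
          exact (List.isChain_append.1 this).1
        · exact h2 r (by simp [hr])
      · cases s with
        | nil => exact absurd rfl hs
        | cons b s => simpa using h3
      · intro x hx
        apply h4 x
        simp only [List.flatten_append, List.flatten_cons, List.mem_append] at hx ⊢
        tauto

theorem LJC_eq [Inhabited A] (K C : Sentence A) (hK : IsSentence K) : LJC K C = cnt K C := by
  classical
  unfold LJC cnt
  have : {f : Filling | IsCIT K f ∧ IsStandardF f ∧ coA K f = C} =
      fl '' (((Seq C).filter (fun l => build l = K) : Finset (List (A × ℕ))) : Set (List (A × ℕ))) := by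
    ext f
    simp only [Set.mem_image, Finset.mem_coe, Finset.mem_filter, mem_Seq]
    constructor
    · rintro ⟨h1, h2, h3⟩
      obtain ⟨l, e1, e2, e3⟩ := fl_surj _ K f hK h1 h2
      refine ⟨l, ⟨⟨e1, ?_⟩, e2⟩, e3⟩
      rw [← fl_coA l e1, e2, e3, h3]
    · rintro ⟨l, ⟨⟨e1, e4⟩, e2⟩, e3⟩
      rw [← e2, ← e3]
      exact ⟨fl_cit l, fl_std l, by rw [fl_coA l e1, e4]⟩
  rw [this, Set.InjOn.ncard_image, Set.ncard_coe_finset]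
  intro l hl l' hl' he
  simp only [Finset.mem_coe, Finset.mem_filter, mem_Seq] at hl hl'
  exact fl_inj l l' hl.1.1 hl'.1.1 (hl.2.trans hl'.2.symm) he

end PartSeven

section PartEight
variable {A : Type*}

/-- Sentences whose letters are a permutation of those of `J`. -/
noncomputable def VJ (J : Sentence A) : Finset (Sentence A) := by
  classical
  exact (J.flatten.permutations.toFinset).biUnion comps

theorem mem_VJ (J K : Sentence A) : K ∈ VJ J ↔ IsSentence K ∧ K.flatten.Perm J.flatten := by
  classical
  unfold VJ
  simp only [Finset.mem_biUnion, List.mem_toFinset, List.mem_permutations, mem_comps]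
  constructor
  · rintro ⟨t, h1, h2, rfl⟩; exact ⟨h2, h1⟩
  · rintro ⟨h1, h2⟩; exact ⟨_, h2, h1, rfl⟩

theorem VJ_congr {J K : Sentence A} (h : K ∈ VJ J) : VJ K = VJ J := by
  rw [mem_VJ] at h
  ext I
  rw [mem_VJ, mem_VJ]
  exact ⟨fun q => ⟨q.1, q.2.trans h.2⟩, fun q => ⟨q.1, q.2.trans h.2.symm⟩⟩

theorem rib_sum (J : Sentence A) (hJ : IsSentence J) :
    ribF J = ∑ K ∈ VJ J, (cnt K J : ℚ) • immF K := by
  classical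
  rw [rib_expand J hJ, ← Finset.sum_fiberwise_of_maps_to (t := VJ J) (g := build)]
  · apply Finset.sum_congr rfl
    intro K _
    rw [Finset.sum_congr rfl (g := fun _ => immF K)]
    · rw [Finset.sum_const, cnt, Nat.cast_smul_eq_nsmul]
    · intro l hl
      rw [Finset.mem_filter] at hl
      rw [hl.2]
  · intro l hl
    rw [mem_VJ]
    exact ⟨build_isSentence l, Seq_perm hl⟩

theorem edge_props [Inhabited A] {K C : Sentence A} (hK : IsSentence K) (h : IsEdge K C) :
    IsSentence C ∧ Phi 0 K < Phi 0 C ∧ K.flatten.Perm C.flatten := by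
  obtain ⟨h1, h2⟩ := h
  rw [LJC_eq K C hK] at h2
  obtain ⟨l, hl, hb⟩ := cnt_ne h2
  have hC : IsSentence C := by
    rw [← ((mem_Seq C l).1 hl).2]; exact cut_isSentence l
  subst hb
  exact ⟨hC, Seq_build_ne hC hl (Ne.symm h1), Seq_perm hl⟩

open Classical in
/-- Predecessors of a vertex. -/
noncomputable def Ed [Inhabited A] (J : Sentence A) : Finset (Sentence A) :=
  (VJ J).filter (fun K => IsEdge K J)

theorem mem_Ed [Inhabited A] {J K : Sentence A} : K ∈ Ed J ↔ IsSentence K ∧ IsEdge K J := by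
  classical
  unfold Ed
  rw [Finset.mem_filter, mem_VJ]
  constructor
  · exact fun h => ⟨h.1.1, h.2⟩
  · exact fun h => ⟨⟨h.1, (edge_props h.1 h.2).2.2⟩, h.2⟩

theorem imm_rec [Inhabited A] (J : Sentence A) (hJ : IsSentence J) :
    immF J = ribF J - ∑ K ∈ Ed J, (LJC K J : ℚ) • immF K := by
  classical
  have hJV : J ∈ VJ J := (mem_VJ J J).2 ⟨hJ, List.Perm.refl _⟩
  have h1 := rib_sum J hJ
  rw [← Finset.add_sum_erase _ _ hJV, cnt_self J hJ] at h1
  have h2 : ∑ K ∈ (VJ J).erase J, (cnt K J : ℚ) • immF K = ∑ K ∈ Ed J, (LJC K J : ℚ) • immF K := by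
    symm
    rw [Finset.sum_subset_zero_on_sdiff (s₂ := (VJ J).erase J)
      (g := fun K => (cnt K J : ℚ) • immF K)]
    · intro K hK
      rw [Ed, Finset.mem_filter] at hK
      rw [Finset.mem_erase]
      exact ⟨fun e => hK.2.1 e.symm, hK.1⟩
    · intro K hK
      rw [Finset.mem_sdiff, Finset.mem_erase, mem_Ed, mem_VJ] at hK
      have : cnt K J = 0 := by
        by_contra hc
        apply hK.2
        refine ⟨hK.1.2.1, Ne.symm hK.1.1, ?_⟩
        rw [LJC_eq K J hK.1.2.1]; exact hc
      simp [this]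
    · intro K hK
      rw [LJC_eq K J (mem_Ed.1 hK).1]
  rw [h2] at h1
  rw [h1]; simp

theorem path_snoc [Inhabited A] (I K J : Sentence A) (q : List (Sentence A)) :
    q ++ [K] ++ [J] ∈ PathsFromTo I J ↔ q ++ [K] ∈ PathsFromTo I K ∧ IsEdge K J := by
  unfold PathsFromTo
  simp only [Set.mem_ofPred_eq, List.Chain']
  rw [List.isChain_append (l₁ := q ++ [K])]
  simp only [List.getLast?_append, List.getLast?_singleton, List.head?_append, List.head?_singleton]
  simp
  cases q <;> simp [and_assoc]

theorem path_single [Inhabited A] (I J x : Sentence A) :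
    [x] ∈ PathsFromTo I J ↔ x = I ∧ x = J := by
  unfold PathsFromTo
  simp only [Set.mem_ofPred_eq, List.Chain']
  simp

theorem path_last [Inhabited A] {I J : Sentence A} {p : List (Sentence A)} (h : p ∈ PathsFromTo I J) :
    ∃ q, p = q ++ [J] := by
  rcases List.eq_nil_or_concat' p with rfl | ⟨q, x, rfl⟩
  · have := h.1; simp at this
  · have := h.2.1
    simp at this
    exact ⟨q, by rw [this]⟩

theorem path_props [Inhabited A] {I J : Sentence A} (hI : IsSentence I) {p : List (Sentence A)}
    (h : p ∈ PathsFromTo I J) : IsSentence J ∧ I.flatten.Perm J.flatten := by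
  induction p using List.reverseRecOn generalizing J with
  | nil => obtain ⟨q, h⟩ := path_last h; simp at h
  | append_singleton p x ih =>
    obtain ⟨q, hq⟩ := path_last h
    obtain ⟨_, hx⟩ := List.append_inj' hq rfl
    simp at hx
    subst hx
    rcases List.eq_nil_or_concat' p with rfl | ⟨r, K, rfl⟩
    · rw [List.nil_append, path_single] at h
      rw [h.1]; exact ⟨hI, List.Perm.refl _⟩
    · rw [path_snoc] at h
      obtain ⟨h1, h2⟩ := ih h.1
      obtain ⟨h3, h4, h5⟩ := edge_props h1 h.2
      exact ⟨h3, h2.trans h5⟩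

theorem zip_tail_snoc {B : Type*} (l : List B) (a b : B) :
    (l ++ [a] ++ [b]).zip (l ++ [a] ++ [b]).tail = (l ++ [a]).zip (l ++ [a]).tail ++ [(a, b)] := by
  induction l with
  | nil => rfl
  | cons x l ih =>
    cases l with
    | nil => rfl
    | cons y l => simpa using ih

theorem weight_snoc [Inhabited A] (q : List (Sentence A)) (K J : Sentence A) :
    pathWeight (q ++ [K] ++ [J]) = - (pathWeight (q ++ [K]) * (LJC K J : ℚ)) := by
  unfold pathWeight
  rw [zip_tail_snoc]
  simp only [List.map_append, List.prod_append, List.length_append, List.length_singleton,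
    List.map_singleton, List.prod_singleton]
  rw [show q.length + 1 + 1 - 1 = (q.length + 1 - 1) + 1 by omega, pow_succ]
  ring

open Classical in
theorem paths_eq [Inhabited A] (I J : Sentence A) (hI : IsSentence I) :
    PathsFromTo I J = (if I = J then {[J]} else ∅) ∪
      ⋃ K ∈ (Ed J : Set (Sentence A)), (fun q => q ++ [J]) '' PathsFromTo I K := by
  ext p
  simp only [Set.mem_union, Set.mem_iUnion, Set.mem_image, Finset.mem_coe]
  constructor
  · intro h
    obtain ⟨q, rfl⟩ := path_last h
    rcases List.eq_nil_or_concat' q with rfl | ⟨r, K, rfl⟩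
    · left
      rw [List.nil_append, path_single] at h
      rw [if_pos h.1.symm]; simp
    · right
      rw [path_snoc] at h
      exact ⟨K, mem_Ed.2 ⟨(path_props hI h.1).1, h.2⟩, _, h.1, rfl⟩
  · rintro (h | ⟨K, hK, q, hq, rfl⟩)
    · split_ifs at h with he
      · simp at h
        subst h; subst he
        rw [path_single]; exact ⟨rfl, rfl⟩
      · simp at h
    · obtain ⟨r, rfl⟩ := path_last hq
      rw [path_snoc]
      exact ⟨hq, (mem_Ed.1 hK).2⟩

theorem paths_finite [Inhabited A] (I J : Sentence A) (hI : IsSentence I) :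
    (PathsFromTo I J).Finite := by
  classical
  induction hn : Phi 0 J using Nat.strong_induction_on generalizing J with
  | _ n ih =>
  rw [paths_eq I J hI]
  apply Set.Finite.union
  · split_ifs <;> simp
  · apply Set.Finite.biUnion (Finset.finite_toSet _)
    intro K hK
    apply Set.Finite.image
    have h1 := mem_Ed.1 (Finset.mem_coe.1 hK)
    exact ih (Phi 0 K) (hn ▸ (edge_props h1.1 h1.2).2.1) K rfl

open Classical in
theorem Linv_rec [Inhabited A] (I J : Sentence A) (hI : IsSentence I) :
    Linv I J = (if I = J then 1 else 0) - ∑ K ∈ Ed J, Linv I K * (LJC K J : ℚ) := by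
  have hinj : ∀ s : Set (List (Sentence A)), Set.InjOn (fun q => q ++ [J]) s := by
    intro s q _ q' _ h
    simpa using h
  unfold Linv
  rw [paths_eq I J hI, finsum_mem_union]
  · rw [finsum_mem_biUnion]
    · rw [finsum_mem_coe_finset, sub_eq_add_neg, ← Finset.sum_neg_distrib]
      congr 1
      · split_ifs
        · rw [finsum_mem_singleton]; simp [pathWeight]
        · simp
      · apply Finset.sum_congr rfl
        intro K hK
        rw [finsum_mem_image (hinj _), finsum_mem_eq_finite_toFinset_sum _ (paths_finite I K hI),
          finsum_mem_eq_finite_toFinset_sum _ (paths_finite I K hI), Finset.sum_mul,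
          ← Finset.sum_neg_distrib]
        apply Finset.sum_congr rfl
        intro q hq
        rw [Set.Finite.mem_toFinset] at hq
        obtain ⟨r, rfl⟩ := path_last hq
        exact weight_snoc r K J
    · intro K _ K' _ hKK
      change Disjoint _ _
      rw [Set.disjoint_left]
      rintro p ⟨q, hq, rfl⟩ ⟨q', hq', he⟩
      have : q' = q := by simpa using he
      subst this
      have := hq.2.1.symm.trans hq'.2.1
      simp at this
      exact hKK this
    · exact Finset.finite_toSet _
    · intro K _
      exact (paths_finite I K hI).image _
  · rw [Set.disjoint_left]
    intro p h1 h2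
    split_ifs at h1
    · simp only [Set.mem_singleton_iff] at h1
      simp only [Set.mem_iUnion, Set.mem_image] at h2
      obtain ⟨K, _, q, hq, he⟩ := h2
      obtain ⟨r, rfl⟩ := path_last hq
      rw [h1] at he
      have := congrArg List.length he
      simp at this
    · simp at h1
  · split_ifs <;> simp
  · apply Set.Finite.biUnion (Finset.finite_toSet _)
    intro K _
    exact (paths_finite I K hI).image _

theorem Linv_zero [Inhabited A] (I J : Sentence A) (h : ¬ (PathsFromTo I J).Nonempty) :
    Linv I J = 0 := by
  rw [Set.not_nonempty_iff_eq_empty] at h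
  unfold Linv
  rw [h, finsum_mem_empty]

theorem imm_expand [Inhabited A] (J : Sentence A) (hJ : IsSentence J) :
    immF J = ∑ I ∈ VJ J, Linv I J • ribF I := by
  classical
  induction hn : Phi 0 J using Nat.strong_induction_on generalizing J with
  | _ n ih =>
  have hJV : J ∈ VJ J := (mem_VJ J J).2 ⟨hJ, List.Perm.refl _⟩
  have h1 : ∀ K ∈ Ed J, (LJC K J : ℚ) • immF K =
      ∑ I ∈ VJ J, (Linv I K * (LJC K J : ℚ)) • ribF I := by
    intro K hK
    have hK' := mem_Ed.1 hK
    rw [ih (Phi 0 K) (hn ▸ (edge_props hK'.1 hK'.2).2.1) K hK'.1 rfl, Finset.smul_sum]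
    have : VJ K = VJ J := by
      apply VJ_congr
      rw [Ed, Finset.mem_filter] at hK
      exact hK.1
    rw [this]
    apply Finset.sum_congr rfl
    intro I _
    rw [smul_smul, mul_comm]
  rw [imm_rec J hJ, Finset.sum_congr rfl h1, Finset.sum_comm]
  have h2 : ribF J = ∑ I ∈ VJ J, (if I = J then (1 : ℚ) else 0) • ribF I := by
    simp [ite_smul, hJV]
  rw [h2, ← Finset.sum_sub_distrib]
  apply Finset.sum_congr rfl
  intro I hI
  rw [Linv_rec I J ((mem_VJ J I).1 hI).1, sub_smul, Finset.sum_smul]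

theorem Phi_path [Inhabited A] {I J : Sentence A} (hI : IsSentence I) {p : List (Sentence A)}
    (h : p ∈ PathsFromTo I J) : Phi 0 I ≤ Phi 0 J := by
  induction p using List.reverseRecOn generalizing J with
  | nil => obtain ⟨q, h⟩ := path_last h; simp at h
  | append_singleton p x ih =>
    obtain ⟨q, hq⟩ := path_last h
    obtain ⟨_, hx⟩ := List.append_inj' hq rfl
    simp at hx
    subst hx
    rcases List.eq_nil_or_concat' p with rfl | ⟨r, K, rfl⟩
    · rw [List.nil_append, path_single] at h
      rw [h.1]
    · rw [path_snoc] at h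
      have h1 := ih h.1
      have := (edge_props (path_props hI h.1).1 h.2).2.1
      omega

theorem Linv_self [Inhabited A] (J : Sentence A) (hJ : IsSentence J) : Linv J J = 1 := by
  classical
  rw [Linv_rec J J hJ, if_pos rfl, Finset.sum_eq_zero, sub_zero]
  intro K hK
  have hK' := mem_Ed.1 hK
  have h1 := (edge_props hK'.1 hK'.2).2.1
  rw [Linv_zero J K, zero_mul]
  rintro ⟨p, hp⟩
  have := Phi_path hJ hp
  omega

theorem size_eq (I : Sentence A) : size I = I.flatten.length := by
  unfold size; rw [List.length_flatten]

theorem main_expand [Inhabited A] (J : Sentence A) (hJ : IsSentence J) :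
    ImmS J = ∑ᶠ I ∈ {I : Sentence A | IsSentence I ∧ size I = size J}, Linv I J • Rib I := by
  rw [finsum_mem_eq_sum_of_inter_support_eq (t := VJ J)]
  · rw [ImmS_eq, imm_expand J hJ, ← coeL_apply, map_sum]
    apply Finset.sum_congr rfl
    intro I hI
    rw [map_smul, coeL_apply, Rib_eq I ((mem_VJ J I).1 hI).1]
  · ext I
    simp only [Set.mem_inter_iff, Finset.mem_coe, Function.mem_support]
    constructor
    · rintro ⟨⟨h1, h2⟩, h3⟩
      refine ⟨(mem_VJ J I).2 ⟨h1, ?_⟩, h3⟩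
      by_contra hc
      apply h3
      rw [Linv_zero I J, zero_smul]
      rintro ⟨p, hp⟩
      exact hc (path_props h1 hp).2
    · rintro ⟨h1, h3⟩
      rw [mem_VJ] at h1
      exact ⟨⟨h1.1, by rw [size_eq, size_eq]; exact h1.2.length_eq⟩, h3⟩

end PartEight

/-- For a sentence `J` of size `n`, the colored immaculate function
expands into the colored ribbon basis as `𝔖_J = Σ_I L⁻¹_{I,J} R_I`, summed over all
sentences `I` of size `n`, where `L⁻¹_{I,J} = Σ_𝒫 (-1)^{ℓ(𝒫)} prod(𝒫)` over directed
paths from `I` to `J` in the colored immaculate descent graph (so `L⁻¹_{I,J} = 0` unless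
`J` is reachable from `I`, and `L⁻¹_{J,J} = 1`). -/
theorem statement17 {A : Type*} [Inhabited A] (J : Sentence A) (hJ : IsSentence J) :
    (ImmS J = ∑ᶠ I ∈ {I : Sentence A | IsSentence I ∧ size I = size J}, Linv I J • Rib I) ∧
    (∀ I : Sentence A, ¬(PathsFromTo I J).Nonempty → Linv I J = 0) ∧
    Linv J J = 1 := by
  exact ⟨main_expand J hJ, fun I h => Linv_zero I J h, Linv_self J hJ⟩

end ColoredImm
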